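/- arXiv:2510.22006 — 4 statements merged into one kernel-verified Lean document; each statement's English description precedes it below -/
import Mathlib

section
/- For all integers α ≥ 1 and n ≥ 0, the number 17·3^{2α} − 1 is divisible by 8 and ped(3^{2α+1}·n + (17·3^{2α} − 1)/8) ≡ 0 (mod 6). -/
/-!
Write `φ = ∑_{k ∈ ℤ} q^{k²}`, `ψ = ∑_{k ∈ ℤ} q^{k(k+1)/2}` (twice the usual one-sided series),
`P = ∑ ped(n) qⁿ`, and `N` for the argument of `ped` in the theorem, so that
`8N + 1 = 9^α (24n + 17)`.

From `P = ∏ (1 + q^{2k}) / (1 - q^{2k-1})` and Gauss's product for triangular numbers (obtained from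
the finite identity `shanks`) one gets `P(q) ψ(-q) = ψ(q²)`, with one-sided `ψ` (`pedSeries_mul`).

*Modulo 2.* By Frobenius the right-hand side is `ψ²`, hence `P = ψ`, and `ped N` is odd only if
`8N + 1` is a square. This is impossible: after removing `9^α`, the number `24n + 17` is
`2` modulo `3`.

*Modulo 3.* Let `θ = q d/dq`. Dissecting modulo `3` and using Frobenius, `θφ = φ - φ⁹` and
`θψ = qψ⁹` over `𝔽₃`. Rotating the lattice `ℤ²` gives `ψ² = 2 φ ψ(q²)` and
`φ² = φ(q²)² + q ψ(q⁴)²`. Applying `θ` to the last identity yields a polynomial relation that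
factors and forces `φ(q²)⁴ + q² ψ(q⁴)⁴ = 1`, and hence `q ψ⁸ = φ⁴ - φ⁸` (`key`).
The series `p = P(-q)` satisfies `p φ = -ψ`; differentiating twice and using `key` gives
`θ(θp + p) = -q ψ⁹ φ³ = -q ψ(q⁹) φ(q³)` (`main_algebra`). As `N ≡ 1` modulo `3`, the coefficient
of `q^N` on the left is `± 2 ped(N)`, while on the right it counts solutions of
`N = 1 + 9 j(j+1)/2 + 3 k²`, i.e. `9^α (24n + 17) = 9 (2j+1)² + 24 k²`. A descent on the power
of `9` shows that there are none (`not_form`).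
-/

open PowerSeries

/-- `ped n` is the number of partitions of `n` in which the even parts are distinct. -/
noncomputable def ped (n : ℕ) : ℕ :=
  Nat.card {p : n.Partition // ∀ k ∈ p.parts, Even k → p.parts.count k ≤ 1}

namespace PedCongruence

/-! ### Series counting the fibres of a function -/

/-- The series `∑ᵢ q^{f i}`: its `n`-th coefficient is the number of `i` with `f i = n`. A fibre that
is infinite contributes `0`, since `Nat.card` is `0` there; finiteness of the fibres is assumed in
the lemmas that need it. -/
noncomputable def countSeries (R : Type*) [CommRing R] {ι : Type*} (f : ι → ℕ) : R⟦X⟧ :=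
  PowerSeries.mk fun n => (Nat.card {i // f i = n} : R)

section Count
variable {R : Type*} [CommRing R] {ι κ : Type*}

lemma coeff_countSeries (f : ι → ℕ) (n : ℕ) :
    coeff n (countSeries R f) = (Nat.card {i // f i = n} : R) := by
  simp [countSeries]

lemma countSeries_comp (e : κ ≃ ι) (f : ι → ℕ) (g : κ → ℕ) (h : ∀ k, f (e k) = g k) :
    countSeries R f = countSeries R g := by
  ext n
  rw [coeff_countSeries, coeff_countSeries,
    Nat.card_congr (e.subtypeEquiv (p := fun k => g k = n) (q := fun i => f i = n)
      (fun k => by rw [h]))]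

lemma countSeries_sum (f : ι ⊕ κ → ℕ) (hf : ∀ n, Finite {i // f i = n}) :
    countSeries R f = countSeries R (f ∘ Sum.inl) + countSeries R (f ∘ Sum.inr) := by
  ext n
  have e : {i // f i = n} ≃ {i // (f ∘ Sum.inl) i = n} ⊕ {i // (f ∘ Sum.inr) i = n} :=
    Equiv.subtypeSum
  have := hf n
  have : Finite ({i // (f ∘ Sum.inl) i = n} ⊕ {i // (f ∘ Sum.inr) i = n}) := Finite.of_equiv _ e
  have := Finite.sum_left (α := {i // (f ∘ Sum.inl) i = n}) {i // (f ∘ Sum.inr) i = n}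
  have := Finite.sum_right {i // (f ∘ Sum.inl) i = n} (β := {i // (f ∘ Sum.inr) i = n})
  rw [map_add, coeff_countSeries, coeff_countSeries, coeff_countSeries, Nat.card_congr e,
    Nat.card_sum, Nat.cast_add]

lemma countSeries_mul (f : ι → ℕ) (g : κ → ℕ) (hf : ∀ n, Finite {i // f i = n})
    (hg : ∀ n, Finite {i // g i = n}) :
    countSeries R f * countSeries R g = countSeries R (fun p : ι × κ => f p.1 + g p.2) := by
  ext n
  rw [coeff_mul, coeff_countSeries]
  let e : {p : ι × κ // f p.1 + g p.2 = n} ≃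
      Σ ab : Finset.HasAntidiagonal.antidiagonal n, {i // f i = ab.1.1} × {j // g j = ab.1.2} :=
    { toFun := fun p => ⟨⟨(f p.1.1, g p.1.2), by simpa using p.2⟩, ⟨p.1.1, rfl⟩, ⟨p.1.2, rfl⟩⟩
      invFun := fun x => ⟨(x.2.1.1, x.2.2.1), by
        have := x.1.2
        rw [Finset.HasAntidiagonal.mem_antidiagonal] at this
        simp [x.2.1.2, x.2.2.2, this]⟩
      left_inv := fun p => rfl
      right_inv := by
        rintro ⟨⟨⟨a, b⟩, h⟩, ⟨i, hi⟩, ⟨j, hj⟩⟩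
        dsimp at hi hj
        subst hi hj
        rfl }
  rw [Nat.card_congr e, Nat.card_sigma]
  simp only [Nat.card_prod, Nat.cast_sum, Nat.cast_mul, coeff_countSeries]
  exact (Finset.sum_coe_sort (Finset.HasAntidiagonal.antidiagonal n)
    (fun ab => (Nat.card {i // f i = ab.1} : R) * (Nat.card {j // g j = ab.2} : R))).symm

lemma X_pow_mul_countSeries (f : ι → ℕ) (c : ℕ) :
    X ^ c * countSeries R f = countSeries R (fun i => f i + c) := by
  ext n
  rw [coeff_X_pow_mul', coeff_countSeries]
  split_ifs with h
  · rw [coeff_countSeries]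
    have : ∀ i, f i = n - c ↔ f i + c = n := fun i => by omega
    simp only [this]
  · have : IsEmpty {i // f i + c = n} := ⟨fun i => h (by have := i.2; omega)⟩
    rw [coeff_countSeries, Nat.card_of_isEmpty, Nat.cast_zero]

lemma expand_countSeries (f : ι → ℕ) (c : ℕ) (hc : c ≠ 0) :
    expand c hc (countSeries R f) = countSeries R (fun i => c * f i) := by
  ext n
  rw [coeff_expand, coeff_countSeries]
  split_ifs with h
  · obtain ⟨m, rfl⟩ := h
    rw [Nat.mul_div_cancel_left _ (Nat.pos_of_ne_zero hc), coeff_countSeries]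
    simp only [Nat.mul_right_inj hc]
  · have : IsEmpty {i // c * f i = n} := ⟨fun i => h ⟨_, i.2.symm⟩⟩
    rw [coeff_countSeries, Nat.card_of_isEmpty, Nat.cast_zero]

end Count

/-! ### Theta series and lattice identities -/

/-- The exponent `k²` as a natural number. -/
def sq (k : ℤ) : ℕ := k.natAbs ^ 2

/-- The exponent `k(k+1)/2`, for every integer `k`; the integer is nonnegative, so nothing is lost in
`Int.toNat`. -/
def tri (k : ℤ) : ℕ := (k * (k + 1) / 2).toNat

lemma cast_sq (k : ℤ) : (sq k : ℤ) = k ^ 2 := by simp [sq]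

lemma cast_tri (k : ℤ) : 2 * (tri k : ℤ) = k * (k + 1) := by
  have h : 0 ≤ k * (k + 1) := by
    rcases le_or_gt 0 k with h | h
    · positivity
    · exact mul_nonneg_of_nonpos_of_nonpos (by omega) (by omega)
  rw [tri, Int.toNat_of_nonneg (by omega)]
  exact Int.mul_ediv_cancel' (Int.even_mul_succ_self k).two_dvd

/-- A function whose values bound an injective integer parameter has finite fibres. -/
lemma finite_of_bound {ι : Type*} (f : ι → ℕ) (g : ι → ℤ) (hg : Function.Injective g)
    (c : ℕ) (h : ∀ i, (g i).natAbs ≤ f i + c) (n : ℕ) : Finite {i // f i = n} := by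
  have : Finite (Set.Icc (-(n + c : ℤ)) (n + c)) := (Set.finite_Icc _ _).to_subtype
  refine Finite.of_injective (β := Set.Icc (-(n + c : ℤ)) (n + c))
    (fun i => ⟨g i.1, ?_⟩) ?_
  · have := h i.1
    rw [i.2] at this
    constructor <;> omega
  · intro i j hij
    exact Subtype.ext (hg (congrArg Subtype.val hij))

lemma finite_sq (n : ℕ) : Finite {k // sq k = n} := by
  refine finite_of_bound sq id Function.injective_id 0 (fun k => ?_) n
  simp only [sq, id]; nlinarith [Nat.zero_le k.natAbs]

lemma finite_tri (n : ℕ) : Finite {k // tri k = n} := by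
  refine finite_of_bound tri id Function.injective_id 1 (fun k => ?_) n
  have := cast_tri k
  simp only [id]
  rcases le_or_gt 0 k with h | h
  · have : k ≤ tri k + 1 := by nlinarith
    omega
  · have : -k ≤ tri k + 1 := by
      by_contra hc
      nlinarith
    omega

lemma finite_mul {ι : Type*} {f : ι → ℕ} (hf : ∀ n, Finite {i // f i = n}) {c : ℕ} (hc : c ≠ 0)
    (n : ℕ) : Finite {i // c * f i = n} := by
  have := hf (n / c)
  refine Finite.of_injective (β := {i // f i = n / c}) (fun i => ⟨i.1, ?_⟩) ?_
  · exact (Nat.div_eq_of_eq_mul_right (Nat.pos_of_ne_zero hc) i.2.symm).symm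
  · intro i j hij
    exact Subtype.ext (congrArg (fun x => x.1) hij)

lemma finite_comp {ι κ : Type*} (e : κ ≃ ι) {f : ι → ℕ} (hf : ∀ n, Finite {i // f i = n}) (n : ℕ) :
    Finite {k // (f ∘ e) k = n} := by
  have := hf n
  refine Finite.of_injective (β := {i // f i = n}) (fun k => ⟨e k.1, k.2⟩) ?_
  intro i j hij
  exact Subtype.ext (e.injective (congrArg (fun x => x.1) hij))

lemma finite_add {ι κ : Type*} {f : ι → ℕ} {g : κ → ℕ} (hf : ∀ n, Finite {i // f i = n})
    (hg : ∀ n, Finite {i // g i = n}) (n : ℕ) : Finite {p : ι × κ // f p.1 + g p.2 = n} := by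
  have : ∀ m, Finite {i // f i = m} := hf
  have : ∀ m, Finite {i // g i = m} := hg
  refine Finite.of_injective
    (β := (Σ a : Fin (n + 1), {i // f i = a.1}) × (Σ b : Fin (n + 1), {j // g j = b.1}))
    (fun p => (⟨⟨f p.1.1, by have := p.2; omega⟩, ⟨p.1.1, rfl⟩⟩,
      ⟨⟨g p.1.2, by have := p.2; omega⟩, ⟨p.1.2, rfl⟩⟩)) ?_
  intro p q hpq
  have h1 := congrArg (fun x => x.1.2.1) hpq
  have h2 := congrArg (fun x => x.2.2.1) hpq
  exact Subtype.ext (Prod.ext h1 h2)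

/-- Dissection: if the images of `a` and `b` partition the index set, the series splits into the two
sub-series. -/
lemma countSeries_split {R : Type*} [CommRing R] {ι κ₁ κ₂ : Type*} (f : ι → ℕ)
    (hf : ∀ n, Finite {i // f i = n}) (a : κ₁ → ι) (b : κ₂ → ι)
    (h : Function.Bijective (Sum.elim a b)) :
    countSeries R f = countSeries R (f ∘ a) + countSeries R (f ∘ b) := by
  rw [countSeries_comp (Equiv.ofBijective _ h) f (f ∘ _) (fun _ => rfl),
    countSeries_sum _ (finite_comp (Equiv.ofBijective _ h) hf)]
  rfl

/-- `φ(q) = ∑_{k ∈ ℤ} q^{k²}`. -/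
noncomputable def phi (R : Type*) [CommRing R] : R⟦X⟧ := countSeries R sq

/-- `ψ(q) = ∑_{k ∈ ℤ} q^{k(k+1)/2}`, summed over all integers, so that each triangular number is
counted twice. -/
noncomputable def psi (R : Type*) [CommRing R] : R⟦X⟧ := countSeries R tri

variable (R : Type*) [CommRing R]

/-- `ψ(q)² = 2 φ(q) ψ(q²)`: substitute `(y + x, y - x)` when the two indices have the same parity,
and use the symmetry `j ↦ -1 - j` to reduce the opposite parity to that case. -/
lemma psi_sq : psi R ^ 2 = 2 * phi R * expand 2 two_ne_zero (psi R) := by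
  rw [pow_two, psi, phi, countSeries_mul _ _ finite_tri finite_tri, expand_countSeries, mul_assoc,
    countSeries_mul _ _ finite_sq (finite_mul finite_tri two_ne_zero), two_mul,
    countSeries_split _ (finite_add finite_tri finite_tri)
      (fun p : ℤ × ℤ => (p.2 + p.1, p.2 - p.1)) (fun p : ℤ × ℤ => (p.2 + p.1, -1 - (p.2 - p.1)))]
  · congr 2 <;>
    · funext p
      simp only [Function.comp]
      zify
      have h1 := cast_tri (p.2 + p.1)
      have h2 := cast_tri (p.2 - p.1)
      have h2' := cast_tri (-1 - (p.2 - p.1))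
      have h3 := cast_tri p.2
      rw [cast_sq]
      linarith
  · constructor
    · rintro (⟨a, b⟩ | ⟨a, b⟩) (⟨c, d⟩ | ⟨c, d⟩) h <;> simp at h ⊢ <;> omega
    · rintro ⟨a, b⟩
      rcases Int.even_or_odd' (a + b) with ⟨c, h | h⟩
      · exact ⟨Sum.inl (a - c, c), by simp; omega⟩
      · exact ⟨Sum.inr (c + 1, a - c - 1), by simp; omega⟩

/-- `φ(q)² = φ(q²)² + q ψ(q⁴)²`: the pairs with even, respectively odd, coordinate sum are
`(y + x, y - x)`, respectively `(y + x + 1, y - x)`. -/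
lemma phi_sq : phi R ^ 2 = expand 2 two_ne_zero (phi R) ^ 2 +
    X * expand 4 four_ne_zero (psi R) ^ 2 := by
  rw [pow_two, pow_two, pow_two, ← pow_one X, psi, phi,
    countSeries_mul _ _ finite_sq finite_sq, expand_countSeries, expand_countSeries,
    countSeries_mul _ _ (finite_mul finite_sq two_ne_zero) (finite_mul finite_sq two_ne_zero),
    countSeries_mul _ _ (finite_mul finite_tri four_ne_zero) (finite_mul finite_tri four_ne_zero),
    X_pow_mul_countSeries,
    countSeries_split _ (finite_add finite_sq finite_sq)
      (fun p : ℤ × ℤ => (p.2 + p.1, p.2 - p.1)) (fun p : ℤ × ℤ => (p.2 + p.1 + 1, p.2 - p.1))]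
  · congr 2
    · funext p
      simp only [Function.comp]
      zify
      simp only [cast_sq]
      ring
    · funext p
      simp only [Function.comp]
      zify
      simp only [cast_sq]
      have h2 := cast_tri p.1
      have h3 := cast_tri p.2
      linarith
  · constructor
    · rintro (⟨a, b⟩ | ⟨a, b⟩) (⟨c, d⟩ | ⟨c, d⟩) h <;> simp at h ⊢ <;> omega
    · rintro ⟨a, b⟩
      rcases Int.even_or_odd' (a + b) with ⟨c, h | h⟩
      · exact ⟨Sum.inl (a - c, c), by simp; omega⟩
      · exact ⟨Sum.inr (c - b, c), by simp; omega⟩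

/-! ### The Euler operator in characteristic three -/

/-- The Euler operator `θ = q d/dq`, which multiplies the `n`-th coefficient by `n`. -/
noncomputable def euler : Derivation R R⟦X⟧ R⟦X⟧ := (X : R⟦X⟧) • derivative R

variable {R}

lemma coeff_euler (F : R⟦X⟧) (n : ℕ) : coeff n (euler R F) = n * coeff n F := by
  rw [euler, Derivation.smul_apply, smul_eq_mul]
  cases n with
  | zero => simp
  | succ n => rw [mul_comm X, coeff_succ_mul_X, coeff_derivative]; push_cast; ring

lemma euler_X : euler R X = X := by simp [euler]

lemma euler_expand (F : R⟦X⟧) (c : ℕ) (hc : c ≠ 0) :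
    euler R (expand c hc F) = c * expand c hc (euler R F) := by
  ext n
  rw [coeff_euler, ← map_natCast (C (R := R)), coeff_C_mul, coeff_expand, coeff_expand]
  split_ifs with h
  · obtain ⟨m, rfl⟩ := h
    rw [Nat.mul_div_cancel_left _ (Nat.pos_of_ne_zero hc), coeff_euler]
    push_cast; ring
  · simp

/-- If all exponents have the same image `r` in `R`, then `θ` acts on the series as multiplication
by `r`. -/
lemma euler_countSeries {ι : Type*} (f : ι → ℕ) (r : ℕ) (h : ∀ i, (f i : R) = r) :
    euler R (countSeries R f) = r * countSeries R f := by
  ext n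
  rw [coeff_euler, ← map_natCast (C (R := R)), coeff_C_mul, coeff_countSeries]
  rcases isEmpty_or_nonempty {i // f i = n} with _ | ⟨⟨i, rfl⟩⟩
  · simp
  · rw [h]

lemma cast_three (a : ℤ) (r : ℕ) (n : ℕ) (h : (n : ℤ) = 3 * a + r) : (n : ZMod 3) = r := by
  have : ((n : ℤ) : ZMod 3) = ((3 * a + r : ℤ) : ZMod 3) := by rw [h]
  push_cast at this
  rw [this, show (3 : ZMod 3) = 0 from rfl]; ring

/-- The residue classes modulo `3`, with the class of `1` singled out: the class on which
`k(k+1)/2` is not divisible by `3`. -/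
lemma bij_three : Function.Bijective (Sum.elim (fun k : ℤ => 3 * k + 1)
    (Sum.elim (fun k : ℤ => 3 * k) (fun k : ℤ => 3 * k + 2))) := by
  constructor
  · rintro (a | a | a) (b | b | b) h <;> simp at h ⊢ <;> omega
  · intro k
    have : k % 3 = 0 ∨ k % 3 = 1 ∨ k % 3 = 2 := by omega
    rcases this with h | h | h
    · exact ⟨Sum.inr (Sum.inl (k / 3)), by simp; omega⟩
    · exact ⟨Sum.inl (k / 3), by simp; omega⟩
    · exact ⟨Sum.inr (Sum.inr (k / 3)), by simp; omega⟩

/-- The residue classes modulo `3`, with the class of `0` singled out: the class on which `k²` is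
divisible by `3`. -/
lemma bij_three' : Function.Bijective (Sum.elim (fun k : ℤ => 3 * k)
    (Sum.elim (fun k : ℤ => 3 * k + 1) (fun k : ℤ => 3 * k + 2))) := by
  constructor
  · rintro (a | a | a) (b | b | b) h <;> simp at h ⊢ <;> omega
  · intro k
    have : k % 3 = 0 ∨ k % 3 = 1 ∨ k % 3 = 2 := by omega
    rcases this with h | h | h
    · exact ⟨Sum.inl (k / 3), by simp; omega⟩
    · exact ⟨Sum.inr (Sum.inl (k / 3)), by simp; omega⟩
    · exact ⟨Sum.inr (Sum.inr (k / 3)), by simp; omega⟩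

lemma frob (F : (ZMod 3)⟦X⟧) : expand 3 three_ne_zero F = F ^ 3 := by
  have h := MvPowerSeries.map_frobenius_expand 3 three_ne_zero (f := (F : MvPowerSeries Unit (ZMod 3)))
  rw [ZMod.frobenius_zmod] at h
  exact h

lemma frob9 (F : (ZMod 3)⟦X⟧) : expand 9 (by norm_num) F = F ^ 9 := by
  rw [show F ^ 9 = (F ^ 3) ^ 3 by ring, ← frob, ← frob, ← expand_mul]

lemma three_eq_zero : (3 : (ZMod 3)⟦X⟧) = 0 := by
  have : (3 : (ZMod 3)⟦X⟧) = C (3 : ZMod 3) := (map_ofNat C 3).symm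
  rw [this, show (3 : ZMod 3) = 0 from rfl, map_zero]

lemma euler_pow_nine (F : (ZMod 3)⟦X⟧) : euler (ZMod 3) (F ^ 9) = 0 := by
  rw [Derivation.leibniz_pow]
  simp only [nsmul_eq_mul, smul_eq_mul]
  linear_combination 3 * (F ^ 8 * euler (ZMod 3) F) * three_eq_zero

/-- Over `𝔽₃`, the terms of `φ` with `3 ∣ k` form `φ(q⁹) = φ⁹`, and all others have exponent `1`
modulo `3`. -/
lemma euler_phi : euler (ZMod 3) (phi (ZMod 3)) = phi (ZMod 3) - phi (ZMod 3) ^ 9 := by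
  have h := countSeries_split (R := ZMod 3) sq finite_sq _ _ bij_three'
  have h0 : countSeries (ZMod 3) (sq ∘ fun k : ℤ => 3 * k) = phi (ZMod 3) ^ 9 := by
    rw [← frob9, phi, expand_countSeries]
    congr 1
    funext k
    zify
    simp [cast_sq]; ring
  rw [h0] at h
  have h1 := euler_countSeries (R := ZMod 3)
    (sq ∘ (Sum.elim (fun k : ℤ => 3 * k + 1) (fun k : ℤ => 3 * k + 2))) 1 (by
      rintro (k | k)
      · exact cast_three (3 * k ^ 2 + 2 * k) _ _ (by simp [cast_sq]; ring)
      · exact cast_three (3 * k ^ 2 + 4 * k + 1) _ _ (by simp [cast_sq]; ring))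
  change phi (ZMod 3) = _ at h
  rw [eq_sub_of_add_eq' h.symm, map_sub, euler_pow_nine, sub_zero, Nat.cast_one, one_mul] at h1
  exact h1

/-- Over `𝔽₃`, the terms of `ψ` with `k ≡ 1` modulo `3` form `q ψ(q⁹) = q ψ⁹`, and all others have
exponent divisible by `3`. -/
lemma euler_psi : euler (ZMod 3) (psi (ZMod 3)) = X * psi (ZMod 3) ^ 9 := by
  have h := countSeries_split (R := ZMod 3) tri finite_tri _ _ bij_three
  have h0 : countSeries (ZMod 3) (tri ∘ fun k : ℤ => 3 * k + 1) = X * psi (ZMod 3) ^ 9 := by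
    rw [← frob9, psi, expand_countSeries, ← pow_one X, X_pow_mul_countSeries]
    congr 1
    funext k
    have h1 := cast_tri (3 * k + 1)
    have h2 := cast_tri k
    simp only [Function.comp]
    zify
    linarith
  rw [h0] at h
  have h1 := euler_countSeries (R := ZMod 3)
    (tri ∘ (Sum.elim (fun k : ℤ => 3 * k) (fun k : ℤ => 3 * k + 2))) 0 (by
      rintro (k | k)
      · refine cast_three (3 * tri k - k) _ _ ?_
        have h1 := cast_tri (3 * k)
        have h2 := cast_tri k
        simp only [Function.comp, Sum.elim_inl]
        push_cast
        linarith
      · refine cast_three (3 * tri k + k + 1) _ _ ?_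
        have h1 := cast_tri (3 * k + 2)
        have h2 := cast_tri k
        simp only [Function.comp, Sum.elim_inr]
        push_cast
        linarith)
  change psi (ZMod 3) = _ at h
  rw [eq_sub_of_add_eq' h.symm, map_sub, Derivation.leibniz, euler_pow_nine, euler_X,
    Nat.cast_zero, zero_mul, smul_zero, zero_add, smul_eq_mul, sub_eq_zero] at h1
  rw [h1, mul_comm]

lemma constantCoeff_phi : constantCoeff (phi R) = 1 := by
  rw [← coeff_zero_eq_constantCoeff_apply, phi, coeff_countSeries]
  have : Unique {k // sq k = 0} := ⟨⟨⟨0, by simp [sq]⟩⟩, fun k => by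
    apply Subtype.ext; simpa [sq] using k.2⟩
  simp

lemma phi_ne_zero : phi (ZMod 3) ≠ 0 := fun h => by
  have := constantCoeff_phi (R := ZMod 3)
  rw [h] at this
  simp at this

/-- The one-sided series `∑_{k ≥ 0} q^{k(k+1)/2}`. -/
noncomputable def psiNat (R : Type*) [CommRing R] : R⟦X⟧ :=
  countSeries R (fun k : ℕ => k * (k + 1) / 2)

lemma psi_eq_two_mul (R : Type*) [CommRing R] : psi R = 2 * psiNat R := by
  have hpos (k : ℕ) : tri k = k * (k + 1) / 2 := by
    have h1 := cast_tri k
    have : 2 * tri k = k * (k + 1) := by exact_mod_cast h1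
    omega
  have hneg (k : ℕ) : tri (-1 - k) = k * (k + 1) / 2 := by
    have h1 := cast_tri (-1 - k)
    have : 2 * (tri (-1 - k) : ℤ) = k * (k + 1) := by rw [h1]; ring
    have : 2 * tri (-1 - k) = k * (k + 1) := by exact_mod_cast this
    omega
  rw [psi, psiNat, countSeries_split tri finite_tri (fun k : ℕ => (k : ℤ))
    (fun k : ℕ => -1 - (k : ℤ)), two_mul]
  · rw [show (tri ∘ fun k : ℕ => (k : ℤ)) = _ from funext hpos,
      show (tri ∘ fun k : ℕ => -1 - (k : ℤ)) = _ from funext hneg]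
  · constructor
    · rintro (a | a) (b | b) h <;> simp at h ⊢ <;> omega
    · intro k
      rcases le_or_gt 0 k with h | h
      · exact ⟨Sum.inl k.toNat, by simp [h]⟩
      · exact ⟨Sum.inr (-1 - k).toNat, by simp; omega⟩

lemma constantCoeff_psiNat : constantCoeff (psiNat R) = 1 := by
  rw [← coeff_zero_eq_constantCoeff_apply, psiNat, coeff_countSeries]
  have : Unique {k : ℕ // k * (k + 1) / 2 = 0} := ⟨⟨⟨0, rfl⟩⟩, fun k => by
    apply Subtype.ext
    have h := k.2
    change k.1 = 0
    by_contra h0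
    have : 1 * 2 ≤ k.1 * (k.1 + 1) := Nat.mul_le_mul (by omega) (by omega)
    omega⟩
  rw [Nat.card_unique, Nat.cast_one]

lemma psi_ne_zero : psi (ZMod 3) ≠ 0 := fun h => by
  have := congrArg constantCoeff (psi_eq_two_mul (ZMod 3))
  rw [h, map_mul, constantCoeff_psiNat] at this
  simp at this
  revert this
  decide

/-- `q ψ⁸ = φ⁴ - φ⁸` over `𝔽₃`. With `c = φ(q²)²` and `e = q ψ(q⁴)²`, the identity `φ² = c + e` and
its image under `θ` give `φ² ((c² + e²)² - 1) = 0`; comparing constant terms, `c² + e² = 1`. On the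
other hand `ψ² = 2 φ ψ(q²)` and `ψ(q²)² = 2 φ(q²) ψ(q⁴)` give `q ψ⁸ = φ⁴ c e`, and
`c e = 1 - (c + e)²` modulo `3`. -/
lemma key : X * psi (ZMod 3) ^ 8 = phi (ZMod 3) ^ 4 - phi (ZMod 3) ^ 8 := by
  have h3 := three_eq_zero
  have hA := psi_sq (ZMod 3)
  have hA2 := congrArg (expand 2 two_ne_zero) hA
  rw [map_pow, map_mul, map_mul, map_ofNat, ← expand_mul] at hA2
  have hB := phi_sq (ZMod 3)
  have hc := euler_expand (phi (ZMod 3)) 2 two_ne_zero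
  have he := euler_expand (psi (ZMod 3)) 4 four_ne_zero
  have hφ := euler_phi
  rw [hφ, map_sub, map_pow] at hc
  rw [euler_psi, map_mul, map_pow, expand_X] at he
  have hB' := congrArg (euler (ZMod 3)) hB
  simp only [map_add, Derivation.leibniz, Derivation.leibniz_pow, euler_X, hc, he, hφ,
    smul_eq_mul, nsmul_eq_mul] at hB'
  push_cast at hB'
  have h0 : constantCoeff (expand 2 two_ne_zero (phi (ZMod 3))) = 1 := by
    rw [constantCoeff_expand, constantCoeff_phi]
  simp only [show 2 * 2 = 4 from rfl] at hA2
  set f := phi (ZMod 3)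
  set t := psi (ZMod 3)
  set f2 := expand 2 two_ne_zero f
  set t2 := expand 2 two_ne_zero t
  set t4 := expand 4 four_ne_zero t
  obtain ⟨c, hcdef⟩ : ∃ c, c = f2 ^ 2 := ⟨_, rfl⟩
  obtain ⟨e, hedef⟩ : ∃ e, e = X * t4 ^ 2 := ⟨_, rfl⟩
  have hfc : f ^ 2 = c + e := by rw [hB, hcdef, hedef]
  have hrel : 2 * (c + e) - 2 * (c + e) ^ 5 = c - c ^ 5 + (e - e ^ 5) := by
    rw [← hfc, hcdef, hedef]
    linear_combination hB' + (f2 ^ 2 - f2 ^ 10 + 3 * X^5 * t4^10) * h3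
  have hsq : f ^ 2 * ((c ^ 2 + e ^ 2) ^ 2 - 1) = 0 := by
    rw [hfc]
    grind
  have hunit : (c ^ 2 + e ^ 2 - 1) * (c ^ 2 + e ^ 2 + 1) = 0 := by
    have := (mul_eq_zero.1 hsq).resolve_left (pow_ne_zero _ phi_ne_zero)
    linear_combination this
  have hone : c ^ 2 + e ^ 2 = 1 := by
    rcases mul_eq_zero.1 hunit with h | h
    · linear_combination h
    · exfalso
      have := congrArg constantCoeff h
      rw [hcdef, hedef] at this
      simp [h0] at this
      revert this
      decide
  have hXt : X * t ^ 8 = f ^ 4 * (c * e) := by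
    rw [hcdef, hedef]
    grind
  rw [hXt]
  have : f ^ 4 = (c + e) ^ 2 := by rw [← hfc]; ring
  rw [show f ^ 8 = f ^ 4 * f ^ 4 by ring]
  nth_rewrite 3 [this]
  linear_combination (f^4) * hone + f^4 * c * e * h3

/-- The second-order differential equation satisfied over `𝔽₃` by the quotient `p = ψ(q²) / ψ(q)`,
which is `-ψ / φ` by `psi_sq`. -/
lemma main_algebra (p : (ZMod 3)⟦X⟧)
    (hp : p * psi (ZMod 3) = expand 2 two_ne_zero (psi (ZMod 3))) :
    euler (ZMod 3) (euler (ZMod 3) p + p) = -(X * psi (ZMod 3) ^ 9 * phi (ZMod 3) ^ 3) := by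
  have h3 := three_eq_zero
  have hA := psi_sq (ZMod 3)
  have hpf : p * phi (ZMod 3) = - psi (ZMod 3) := by
    apply mul_right_cancel₀ psi_ne_zero
    linear_combination hA + phi (ZMod 3) * hp +
      phi (ZMod 3) * expand 2 two_ne_zero (psi (ZMod 3)) * h3
  have hk := key
  have hφ := euler_phi
  have hψ := euler_psi
  have d1 := congrArg (euler (ZMod 3)) hpf
  simp only [map_neg, Derivation.leibniz, smul_eq_mul, hφ, hψ] at d1
  set f := phi (ZMod 3)
  set t := psi (ZMod 3)
  obtain ⟨r, hr⟩ : ∃ r, r = euler (ZMod 3) p + p := ⟨_, rfl⟩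
  rw [← hr]
  have hrf : r * f = - (t * f ^ 8) - X * t ^ 9 := by
    rw [hr]
    linear_combination d1 + f ^ 8 * hpf
  have d2 := congrArg (euler (ZMod 3)) hrf
  simp only [map_sub, map_neg, Derivation.leibniz, Derivation.leibniz_pow,
    smul_eq_mul, nsmul_eq_mul, hφ, hψ, euler_X] at d2
  push_cast at d2
  apply mul_right_cancel₀ phi_ne_zero
  change _ * f = _ * f
  linear_combination d2 - (1 - f ^ 8) * hrf + t * (f ^ 4 - 2 * f ^ 8) * hk +
    (t * (-2 * f ^ 8 - f ^ 12 + 3 * f ^ 16) - 3 * X ^ 2 * t ^ 17) * h3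


/-! ### Gauss's identity and the generating function of `ped` -/

/-- Shanks's finite form of Gauss's identity
`∏ (1 - q^{2k}) / (1 - q^{2k-1}) = ∑_{s ≥ 0} q^{s(s+1)/2}`, with denominators cleared. -/
lemma shanks {A : Type*} [CommRing A] (q : A) (n : ℕ) :
    (∏ k ∈ Finset.range n, (1 - q ^ (2 * k + 1))) *
      ∑ s ∈ Finset.range (2 * n), q ^ (s * (s + 1) / 2) =
    ∑ s ∈ Finset.range n, (∏ k ∈ Finset.Ico s n, (1 - q ^ (2 * k + 2))) *
      (∏ k ∈ Finset.range s, (1 - q ^ (2 * k + 1))) * q ^ (s * (2 * n + 1)) := by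
  induction n with
  | zero => simp
  | succ n ih =>
    have e1 : 2 * n * (2 * n + 1) / 2 = n * (2 * n + 1) := by
      rw [mul_assoc]; exact Nat.mul_div_cancel_left _ two_pos
    have e2 : (2 * n + 1) * (2 * n + 1 + 1) / 2 = (n + 1) * (2 * n + 1) := by
      rw [show (2 * n + 1) * (2 * n + 1 + 1) = 2 * ((n + 1) * (2 * n + 1)) by ring]
      exact Nat.mul_div_cancel_left _ two_pos
    -- The difference between the `s`-th term at level `n + 1` and `1 - q^(2n+1)` times the `s`-th term
    -- at level `n` telescopes in `s`.
    have tel : ∀ m ≤ n, ∑ s ∈ Finset.range m,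
        ((∏ k ∈ Finset.Ico s (n + 1), (1 - q ^ (2 * k + 2))) *
          (∏ k ∈ Finset.range s, (1 - q ^ (2 * k + 1))) * q ^ (s * (2 * (n + 1) + 1)) -
        (1 - q ^ (2 * n + 1)) * ((∏ k ∈ Finset.Ico s n, (1 - q ^ (2 * k + 2))) *
          (∏ k ∈ Finset.range s, (1 - q ^ (2 * k + 1))) * q ^ (s * (2 * n + 1)))) =
        (1 - q ^ (2 * m)) * (∏ k ∈ Finset.Ico m n, (1 - q ^ (2 * k + 2))) *
          (∏ k ∈ Finset.range m, (1 - q ^ (2 * k + 1))) * q ^ (m * (2 * n + 1)) := by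
      intro m
      induction m with
      | zero => simp
      | succ m ihm =>
        intro hm
        rw [Finset.sum_range_succ, ihm (by omega), Finset.prod_range_succ,
          Finset.prod_Ico_succ_top (by omega), Finset.prod_eq_prod_Ico_succ_bot (by omega : m < n)]
        ring
    have tn := tel n le_rfl
    rw [Finset.sum_sub_distrib, ← Finset.mul_sum, ← ih] at tn
    rw [Finset.sum_range_succ (n := n), eq_add_of_sub_eq tn, show 2 * (n + 1) = 2 * n + 1 + 1 by ring,
      Finset.sum_range_succ, Finset.sum_range_succ, e1, e2, Finset.prod_range_succ]
    simp only [Finset.Ico_self, Finset.prod_empty, Nat.Ico_succ_singleton, Finset.prod_singleton]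
    ring

/-- Gauss's identity modulo `q^(2n+1)`: only the term `s = 0` of `shanks` survives. -/
lemma shanks_dvd {A : Type*} [CommRing A] (q : A) {n : ℕ} (hn : 0 < n) :
    q ^ (2 * n + 1) ∣ (∏ k ∈ Finset.range n, (1 - q ^ (2 * k + 1))) *
      ∑ s ∈ Finset.range (2 * n), q ^ (s * (s + 1) / 2) -
      ∏ k ∈ Finset.range n, (1 - q ^ (2 * k + 2)) := by
  rw [shanks]
  cases n with
  | zero => omega
  | succ n =>
    rw [Finset.sum_range_succ']
    simp only [zero_mul, pow_zero, mul_one, Finset.range_zero, Finset.prod_empty,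
      Nat.Ico_zero_eq_range, add_sub_cancel_right]
    refine Finset.dvd_sum fun s _ => Dvd.dvd.mul_left (pow_dvd_pow _ ?_) _
    nlinarith

lemma psiNat_dvd (m : ℕ) :
    X ^ m ∣ psiNat R - ∑ s ∈ Finset.range m, X ^ (s * (s + 1) / 2) := by
  rw [X_pow_dvd_iff]
  intro n hn
  rw [map_sub, sub_eq_zero, psiNat, coeff_countSeries, map_sum]
  simp only [coeff_X_pow]
  rw [Finset.sum_boole]
  congr 1
  refine Nat.subtype_card _ fun k => ?_
  simp only [Finset.mem_filter, Finset.mem_range]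
  refine ⟨fun h => h.2.symm, fun h => ⟨?_, h.symm⟩⟩
  have : 2 * k ≤ k * (k + 1) := by nlinarith [Nat.zero_le k, Nat.le_self_pow two_ne_zero k]
  omega

/-- The generating function `∑ ped(n) qⁿ` with coefficients in `R`. -/
noncomputable def pedSeries (R : Type*) [CommRing R] : R⟦X⟧ :=
  PowerSeries.mk fun n => (ped n : R)

lemma pedSeries_eq_genFun :
    pedSeries R = Nat.Partition.genFun (fun i c => if Even i ∧ 1 < c then (0 : R) else 1) := by
  classical
  ext n
  rw [Nat.Partition.coeff_genFun, pedSeries, coeff_mk, ped, Nat.card_eq_fintype_card,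
    Fintype.card_subtype, ← Finset.sum_boole]
  refine Finset.sum_congr rfl fun p _ => ?_
  rw [Finsupp.prod]
  split_ifs with h
  · refine (Finset.prod_eq_one fun i hi => if_neg ?_).symm
    rintro ⟨h1, h2⟩
    have := h i (by simpa using hi) h1
    simp at h2
    omega
  · push Not at h
    obtain ⟨k, hk, hk1, hk2⟩ := h
    symm
    apply Finset.prod_eq_zero (i := k)
    · simpa using hk
    · exact if_pos ⟨hk1, by simpa using hk2⟩

open scoped PowerSeries.WithPiTopology in
/-- The product formula `∑ ped(n) qⁿ = ∏ (1 + q^{2k}) / (1 - q^{2k-1})`, truncated modulo `q^m`: the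
partial product `Q` with `2N` factors agrees with the generating function up to that order. The
infinite product converges in the product topology for discrete `R`, so that each coefficient is
eventually constant. -/
lemma exists_truncated_product (m : ℕ) : ∃ (N : ℕ) (Q : R⟦X⟧), m ≤ N ∧ X ^ m ∣ pedSeries R - Q ∧
    Q * ∏ k ∈ Finset.range N, (1 - X ^ (2 * k + 1)) =
      ∏ k ∈ Finset.range N, (1 + X ^ (2 * k + 2)) := by
  let _ : TopologicalSpace R := ⊥
  have : DiscreteTopology R := ⟨rfl⟩
  have hprod := Nat.Partition.hasProd_genFun (fun i c => if Even i ∧ 1 < c then (0 : R) else 1)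
  rw [← pedSeries_eq_genFun] at hprod
  obtain ⟨F, hF⟩ : ∃ F : ℕ → R⟦X⟧, F = fun i => 1 + ∑' j,
    (if Even (i + 1) ∧ 1 < j + 1 then (0 : R) else 1) • (X : R⟦X⟧) ^ ((i + 1) * (j + 1)) := ⟨_, rfl⟩
  rw [← hF] at hprod
  have hodd (k : ℕ) : F (2 * k) * (1 - X ^ (2 * k + 1)) = 1 := by
    have h0 : constantCoeff ((X : R⟦X⟧) ^ (2 * k + 1)) = 0 := by simp
    have h1 := WithPiTopology.tsum_pow_mul_one_sub_of_constantCoeff_eq_zero h0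
    refine Eq.trans ?_ h1
    congr 1
    rw [(WithPiTopology.summable_pow_of_constantCoeff_eq_zero h0).tsum_eq_zero_add, pow_zero]
    simp only [hF]
    congr 2
    funext j
    rw [if_neg (by rintro ⟨h, -⟩; exact Nat.not_even_bit1 k h), one_smul, pow_mul]
  have heven (k : ℕ) : F (2 * k + 1) = 1 + X ^ (2 * k + 2) := by
    simp only [hF]
    rw [tsum_eq_single 0]
    · simp
    · intro j hj
      rw [if_pos ⟨⟨k + 1, by ring⟩, by omega⟩, zero_smul]
  have hlim := hprod.tendsto_prod_nat
  rw [WithPiTopology.tendsto_iff_coeff_tendsto] at hlim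
  have hev : ∀ᶠ N in Filter.atTop, ∀ d ∈ Finset.range m,
      coeff d (∏ i ∈ Finset.range N, F i) = coeff d (pedSeries R) := by
    rw [Filter.eventually_all_finset]
    intro d _
    have h := hlim d
    rwa [nhds_discrete, Filter.tendsto_pure] at h
  obtain ⟨N₀, hN₀⟩ := Filter.eventually_atTop.1 hev
  refine ⟨max N₀ m, ∏ i ∈ Finset.range (2 * max N₀ m), F i, le_max_right _ _, ?_, ?_⟩
  · rw [X_pow_dvd_iff]
    intro d hd
    rw [map_sub, hN₀ _ (by omega) d (Finset.mem_range.2 hd), sub_self]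
  · generalize max N₀ m = N
    induction N with
    | zero => simp
    | succ N ih =>
      rw [show 2 * (N + 1) = 2 * N + 1 + 1 by ring, Finset.prod_range_succ _ (2 * N + 1),
        Finset.prod_range_succ _ (2 * N), Finset.prod_range_succ _ N, Finset.prod_range_succ _ N, ← ih,
        ← heven]
      linear_combination (∏ x ∈ Finset.range (2 * N), F x) * F (2 * N + 1) *
        (∏ x ∈ Finset.range N, (1 - X ^ (2 * x + 1))) * hodd N

/-- `P(q) ψ(-q) = ψ(q²)` for one-sided `ψ`. Gauss's identity at `-q` and at `q²` turns both sides
into the same product; everything is compared modulo `q^(m+1)` for each `m`. -/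
lemma pedSeries_mul : pedSeries R * rescale (-1) (psiNat R) = expand 2 two_ne_zero (psiNat R) := by
  rw [← sub_eq_zero]
  ext m
  rw [map_zero]
  obtain ⟨N, Q, hN, hQ, hprod⟩ := exists_truncated_product (R := R) (m + 1)
  have hs := map_dvd (rescale (-1 : R)) (psiNat_dvd (R := R) (2 * N))
  have hs2 := map_dvd (expand 2 two_ne_zero) (psiNat_dvd (R := R) (2 * N))
  simp only [map_sub, map_sum, map_pow, rescale_X, expand_X] at hs hs2
  have g1 := shanks_dvd (C (-1 : R) * X) (n := N) (by omega)
  have g2 := shanks_dvd ((X : R⟦X⟧) ^ 2) (n := N) (by omega)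
  have hX : ∀ k, (X : R⟦X⟧) ^ k ∣ (C (-1 : R) * X) ^ k := fun k => by
    rw [mul_pow]; exact Dvd.intro_left _ rfl
  have hX2 : ∀ k, (X : R⟦X⟧) ^ k ∣ (X ^ 2) ^ k := fun k => by
    rw [← pow_mul]; exact pow_dvd_pow _ (by omega)
  have hle : ∀ k, m + 1 ≤ k → (X : R⟦X⟧) ^ (m + 1) ∣ X ^ k := fun k h => pow_dvd_pow _ h
  replace hs := ((hle _ (by omega)).trans (hX _)).trans hs
  replace hs2 := ((hle _ (by omega)).trans (hX2 _)).trans hs2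
  replace g1 := ((hle _ (by omega)).trans (hX _)).trans g1
  replace g2 := ((hle _ (by omega)).trans (hX2 _)).trans g2
  have p1 : ∏ k ∈ Finset.range N, (1 - ((X : R⟦X⟧) ^ 2) ^ (2 * k + 1)) =
      (∏ k ∈ Finset.range N, (1 - X ^ (2 * k + 1))) *
      ∏ k ∈ Finset.range N, (1 - (C (-1 : R) * X) ^ (2 * k + 1)) := by
    rw [← Finset.prod_mul_distrib]
    refine Finset.prod_congr rfl fun k _ => ?_
    have : (C (-1 : R) * X) ^ (2 * k + 1) = - X ^ (2 * k + 1) := by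
      rw [map_neg, map_one, neg_one_mul, Odd.neg_pow ⟨k, rfl⟩]
    rw [this]; ring
  have p2 : ∏ k ∈ Finset.range N, (1 - ((X : R⟦X⟧) ^ 2) ^ (2 * k + 2)) =
      (∏ k ∈ Finset.range N, (1 + X ^ (2 * k + 2))) *
      ∏ k ∈ Finset.range N, (1 - (C (-1 : R) * X) ^ (2 * k + 2)) := by
    rw [← Finset.prod_mul_distrib]
    refine Finset.prod_congr rfl fun k _ => ?_
    have : (C (-1 : R) * X) ^ (2 * k + 2) = X ^ (2 * k + 2) := by
      rw [map_neg, map_one, neg_one_mul, Even.neg_pow ⟨k + 1, by ring⟩]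
    rw [this]; ring
  rw [p1, p2, ← hprod] at g2
  set D := ∏ k ∈ Finset.range N, (1 - (X : R⟦X⟧) ^ (2 * k + 1)) with hD
  set B := ∏ k ∈ Finset.range N, (1 - (C (-1 : R) * X) ^ (2 * k + 1)) with hB
  have hunit : IsUnit (D * B) := by
    rw [isUnit_iff_constantCoeff]
    simp [hD, hB, map_prod]
  have hdvd : X ^ (m + 1) ∣ D * B * (pedSeries R * rescale (-1) (psiNat R) -
      expand 2 two_ne_zero (psiNat R)) := by
    set A := ∏ k ∈ Finset.range N, (1 - (C (-1 : R) * X) ^ (2 * k + 2))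
    set s := rescale (-1) (psiNat R)
    obtain ⟨a, ha⟩ := hQ
    obtain ⟨b, hb⟩ := hs
    obtain ⟨c, hc⟩ := hs2
    obtain ⟨d, hd⟩ := g1
    obtain ⟨e, he⟩ := g2
    refine ⟨D * B * s * a + D * B * Q * b - D * B * c + D * Q * d - e, ?_⟩
    linear_combination D * B * s * ha + D * B * Q * hb - D * B * hc + D * Q * hd - he
  rw [hunit.dvd_mul_left] at hdvd
  exact X_pow_dvd_iff.1 hdvd m (by omega)

/-! ### Arithmetic of the exponents and the two congruences -/

lemma not_square (n b : ℕ) (y : ℤ) : y ^ 2 ≠ 9 ^ b * (24 * n + 17) := by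
  induction b generalizing y with
  | zero =>
    intro h
    have h1 : y ^ 2 % 3 = 2 := by rw [h]; omega
    have : y % 3 = 0 ∨ y % 3 = 1 ∨ y % 3 = 2 := by omega
    rcases this with h | h | h <;> simp [pow_two, Int.mul_emod, h] at h1
  | succ b ih =>
    intro h
    have h3 : (3 : ℤ) ∣ y := Int.prime_three.dvd_of_dvd_pow (n := 2)
      ⟨3 * 9 ^ b * (24 * n + 17), by rw [h]; ring⟩
    obtain ⟨z, rfl⟩ := h3
    refine ih z ?_
    rw [pow_succ (9 : ℤ)] at h
    linarith

/-- By descent on `b`: the equation forces `3 ∣ k`, and if `b > 0` also `3 ∣ y`, so a factor `9` cancels;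
for `b = 0` it forces `y² ≡ 2` modulo `3`. -/
lemma not_form (n b : ℕ) (k y : ℤ) : 24 * k ^ 2 + 9 * y ^ 2 ≠ 9 ^ (b + 1) * (24 * n + 17) := by
  induction b generalizing k y with
  | zero =>
    intro h
    rw [zero_add, pow_one] at h
    have h3 : (3 : ℤ) ∣ k := Int.prime_three.dvd_of_dvd_pow (n := 2) (by omega)
    obtain ⟨l, rfl⟩ := h3
    have h1 : y ^ 2 % 3 = 2 := by
      have : y ^ 2 = 3 * (8 * n + 5 - 8 * l ^ 2) + 2 := by linarith
      omega
    have : y % 3 = 0 ∨ y % 3 = 1 ∨ y % 3 = 2 := by omega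
    rcases this with h | h | h <;> simp [pow_two, Int.mul_emod, h] at h1
  | succ b ih =>
    intro h
    rw [pow_succ (9 : ℤ) (b + 1), mul_right_comm] at h
    have h3 : (3 : ℤ) ∣ k := by
      refine Int.prime_three.dvd_of_dvd_pow (n := 2) ?_
      generalize (9 : ℤ) ^ (b + 1) * (24 * n + 17) = u at h
      omega
    obtain ⟨l, rfl⟩ := h3
    have h4 : (3 : ℤ) ∣ y := by
      refine Int.prime_three.dvd_of_dvd_pow (n := 2) ⟨3 * 9 ^ b * (24 * n + 17) - 8 * l ^ 2, ?_⟩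
      rw [pow_succ (9 : ℤ) b] at h
      linarith
    obtain ⟨z, rfl⟩ := h4
    exact ih l z (by linarith)

lemma ped_mod_two {N n a : ℕ} (hN : 8 * N + 1 = 9 ^ a * (24 * n + 17)) : (ped N : ZMod 2) = 0 := by
  have h := pedSeries_mul (R := ZMod 2)
  have hfrob : expand 2 two_ne_zero (psiNat (ZMod 2)) = psiNat (ZMod 2) ^ 2 := by
    have h := MvPowerSeries.map_frobenius_expand 2 two_ne_zero
      (f := (psiNat (ZMod 2) : MvPowerSeries Unit (ZMod 2)))
    rw [ZMod.frobenius_zmod, MvPowerSeries.map_id] at h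
    exact h
  rw [show (-1 : ZMod 2) = 1 from rfl, rescale_one, RingHom.id_apply, hfrob, pow_two] at h
  have hne : psiNat (ZMod 2) ≠ 0 := fun h => by
    have := constantCoeff_psiNat (R := ZMod 2)
    rw [h] at this
    simp at this
  have h1 := congrArg (coeff N) (mul_right_cancel₀ hne h)
  rw [pedSeries, coeff_mk, psiNat, coeff_countSeries] at h1
  rw [h1]
  have : IsEmpty {k : ℕ // k * (k + 1) / 2 = N} := by
    refine ⟨fun ⟨k, hk⟩ => not_square n a (2 * k + 1) ?_⟩
    have h2 : 2 * N = k * (k + 1) := by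
      have := (Nat.even_mul_succ_self k).two_dvd
      omega
    have h3 : (2 * k + 1) ^ 2 = 9 ^ a * (24 * n + 17) := by rw [← hN]; linarith
    exact_mod_cast h3
  rw [Nat.card_of_isEmpty, Nat.cast_zero]

lemma ped_mod_three {N n a : ℕ} (hN : 8 * N + 1 = 9 ^ (a + 1) * (24 * n + 17)) :
    (ped N : ZMod 3) = 0 := by
  -- The substitution `q ↦ -q` puts the identity in the form required by `main_algebra`.
  have h := congrArg (rescale (-1)) (pedSeries_mul (R := ZMod 3))
  have he : rescale (-1) (expand 2 two_ne_zero (psiNat (ZMod 3))) =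
      expand 2 two_ne_zero (psiNat (ZMod 3)) := by
    ext m
    rw [coeff_rescale, coeff_expand]
    split_ifs with h2
    · rw [Even.neg_one_pow (even_iff_two_dvd.2 h2), one_mul]
    · simp
  rw [map_mul, he, rescale_rescale, neg_one_mul, neg_neg, rescale_one, RingHom.id_apply] at h
  have hm := main_algebra (rescale (-1) (pedSeries (ZMod 3))) (by
    rw [psi_eq_two_mul, map_mul, map_ofNat, ← h]; ring)
  have hser : X * psi (ZMod 3) ^ 9 * phi (ZMod 3) ^ 3 =
      countSeries (ZMod 3) (fun p : ℤ × ℤ => 9 * tri p.1 + 3 * sq p.2 + 1) := by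
    rw [← frob, ← frob9, psi, phi, expand_countSeries, expand_countSeries, mul_assoc,
      countSeries_mul _ _ (finite_mul finite_tri (by norm_num)) (finite_mul finite_sq three_ne_zero),
      ← pow_one X, X_pow_mul_countSeries]
  have hempty : IsEmpty {p : ℤ × ℤ // 9 * tri p.1 + 3 * sq p.2 + 1 = N} := by
    refine ⟨fun ⟨p, hp⟩ => not_form n a p.2 (2 * p.1 + 1) ?_⟩
    zify at hp hN
    rw [← hN, ← hp, cast_sq]
    have := cast_tri p.1
    linarith
  have hc := congrArg (coeff N) hm
  rw [hser, coeff_euler, map_add, coeff_euler, map_neg, coeff_countSeries, Nat.card_of_isEmpty,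
    coeff_rescale, pedSeries, coeff_mk] at hc
  have hN3 : (N : ZMod 3) = 1 := by
    have hmod : N % 3 = 1 % 3 := by
      rw [pow_succ, mul_comm (9 ^ a), mul_assoc] at hN
      omega
    exact_mod_cast (ZMod.natCast_eq_natCast_iff' N 1 3).2 hmod
  rw [hN3] at hc
  have hs : ((-1 : ZMod 3) ^ N) ^ 2 = 1 := by rw [← pow_mul, mul_comm, pow_mul]; simp
  have h3 : (3 : ZMod 3) = 0 := rfl
  linear_combination (-ped N : ZMod 3) * hs - (-1) ^ N * hc + (-1) ^ N * (-1) ^ N * ped N * h3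

end PedCongruence

theorem ped_congruence_family (α n : ℕ) (hα : 1 ≤ α) :
    8 ∣ (17 * 3 ^ (2 * α) - 1) ∧
    ped (3 ^ (2 * α + 1) * n + (17 * 3 ^ (2 * α) - 1) / 8) ≡ 0 [MOD 6] := by
  obtain ⟨a, rfl⟩ := Nat.exists_eq_add_of_le' hα
  have h9 : 9 ^ (a + 1) % 8 = 1 := by rw [Nat.pow_mod]; simp
  have hpow : 3 ^ (2 * (a + 1)) = 9 ^ (a + 1) := by rw [pow_mul]; norm_num
  have hpow' : 3 ^ (2 * (a + 1) + 1) = 3 * 9 ^ (a + 1) := by rw [pow_succ, hpow, mul_comm]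
  rw [hpow, hpow']
  have hdvd : 8 ∣ 17 * 9 ^ (a + 1) - 1 := by omega
  refine ⟨hdvd, ?_⟩
  have hN : 8 * (3 * 9 ^ (a + 1) * n + (17 * 9 ^ (a + 1) - 1) / 8) + 1 =
      9 ^ (a + 1) * (24 * n + 17) := by
    have h1 : 8 * ((17 * 9 ^ (a + 1) - 1) / 8) + 1 = 17 * 9 ^ (a + 1) := by omega
    linarith
  have h2 := (ZMod.natCast_eq_zero_iff _ _).1 (PedCongruence.ped_mod_two hN)
  have h3 := (ZMod.natCast_eq_zero_iff _ _).1 (PedCongruence.ped_mod_three hN)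
  exact (Nat.modEq_zero_iff_dvd).2 (Nat.Coprime.mul_dvd_of_dvd_of_dvd (by norm_num) h2 h3)
end

section
/- For all integers α ≥ 1 and n ≥ 0, the number 23·3^{2α} + 1 is divisible by 8 and pod(3^{2α+1}·n + (23·3^{2α} + 1)/8) ≡ 0 (mod 3). -/
/-!
Modulo 3, let `ψ = ∑ (-X)^(j(j+1)/2)` and let `E` be the substitution `X ↦ X^3`, so that
`ψ^3 = E ψ`. The generating function `G` of `pod` is
`∏ (1 + X^(2k+1)) / (1 - X^(2k+2))`, and Gauss's triangular number identity says `G * ψ = 1`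
(`podSeries_mul_psi`). Gauss's identity is obtained from its finite form due to Shanks
(`shanks_identity`), which is a telescoping sum.

Sorting triangular numbers modulo 3 gives `ψ = E A - X * E (E ψ)` for some `A`
(`psi_dissection`). Since `G = ψ^2 * E G`, the coefficients of `G` at `3m+2` are those of
`(E ψ)^2 * G = ψ^5 = ψ^2 * E ψ`, and the coefficients of `ψ^2 * E ψ` at `3m+2` are those of
`C = ψ * (E ψ)^2`. Hence `pod (9m+8)` is the `m`-th coefficient `c m` of `C`. The dissection also
gives `c (3m+2) = 0` and `c (9m+7) = -c m`. In terms of `8m+7`, the last relation is multiplication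
by `9`, so `c m = 0` whenever `8m+7 = 9^β * (24n+23)`.
-/

open PowerSeries

/-- `pod n` is the number of partitions of `n` in which the odd parts are distinct. -/
noncomputable def pod (n : ℕ) : ℕ :=
  Nat.card {p : n.Partition // ∀ k ∈ p.parts, Odd k → p.parts.count k ≤ 1}

/-! ### Shanks's finite form of Gauss's identity -/

section Shanks

variable {R : Type*} [CommRing R]

/-- `∏_{k=1}^{n} (1 - q^(2k-1))`. -/
def oddProd (q : R) (n : ℕ) : R := ∏ k ∈ Finset.range n, (1 - q ^ (2 * k + 1))

/-- `∏_{k=s+1}^{n} (1 - q^(2k))`. -/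
def evenProd (q : R) (s n : ℕ) : R := ∏ k ∈ Finset.Ico s n, (1 - q ^ (2 * k + 2))

/-- The `s`-th summand in Shanks's identity. -/
def shanksTerm (q : R) (n s : ℕ) : R := evenProd q s n * oddProd q s * q ^ (s * (2 * n + 1))

lemma oddProd_succ (q : R) (n : ℕ) :
    oddProd q (n + 1) = oddProd q n * (1 - q ^ (2 * n + 1)) := by
  simp [oddProd, Finset.prod_range_succ]

lemma evenProd_self (q : R) (n : ℕ) : evenProd q n n = 1 := by simp [evenProd]

lemma evenProd_succ_right (q : R) {s n : ℕ} (h : s ≤ n) :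
    evenProd q s (n + 1) = evenProd q s n * (1 - q ^ (2 * n + 2)) := by
  simp [evenProd, Finset.prod_Ico_succ_top h]

lemma evenProd_succ_left (q : R) {s n : ℕ} (h : s < n) :
    evenProd q s n = (1 - q ^ (2 * s + 2)) * evenProd q (s + 1) n := by
  simp [evenProd, Finset.prod_eq_prod_Ico_succ_bot h]

/-- The telescoping sum behind Shanks's identity. -/
lemma shanks_telescope (q : R) (n m : ℕ) (h : m ≤ n) :
    ∑ s ∈ Finset.range (m + 1),
      (shanksTerm q (n + 1) s - (1 - q ^ (2 * n + 1)) * shanksTerm q n s) =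
    evenProd q m n * oddProd q (m + 1) * q ^ ((m + 1) * (2 * n + 1)) := by
  induction m with
  | zero =>
    simp [shanksTerm, evenProd_succ_right q (Nat.zero_le n), oddProd]
    ring
  | succ m ih =>
    rw [Finset.sum_range_succ, ih (by omega), shanksTerm, shanksTerm, evenProd_succ_right q h,
      evenProd_succ_left q (show m < n by omega), oddProd_succ q (m + 1)]
    ring

lemma shanks_identity (q : R) (n : ℕ) :
    ∑ s ∈ Finset.range (n + 1), shanksTerm q n s =
      oddProd q n * ∑ j ∈ Finset.range (2 * n + 1), q ^ (j * (j + 1) / 2) := by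
  induction n with
  | zero => simp [shanksTerm, oddProd, evenProd]
  | succ n ih =>
    have ht := shanks_telescope q n n le_rfl
    rw [Finset.sum_sub_distrib, ← Finset.mul_sum, ih, evenProd_self] at ht
    have e1 : (2 * n + 1) * (2 * n + 1 + 1) / 2 = (n + 1) * (2 * n + 1) := by
      rw [show (2 * n + 1) * (2 * n + 1 + 1) = 2 * ((n + 1) * (2 * n + 1)) by ring]
      simp
    have e2 : (2 * n + 1 + 1) * (2 * n + 1 + 1 + 1) / 2 = (n + 1) * (2 * (n + 1) + 1) := by
      rw [show (2 * n + 1 + 1) * (2 * n + 1 + 1 + 1) = 2 * ((n + 1) * (2 * (n + 1) + 1)) by ring]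
      simp
    rw [Finset.sum_range_succ, show 2 * (n + 1) + 1 = 2 * n + 1 + 1 + 1 by ring,
      Finset.sum_range_succ _ (2 * n + 1 + 1), Finset.sum_range_succ _ (2 * n + 1), e1, e2,
      shanksTerm, evenProd_self]
    rw [oddProd_succ] at ht ⊢
    linear_combination ht

end Shanks

/-! ### The theta series and the generating function of `pod` -/

open Classical in
/-- The series `ψ = ∑_j (-X)^(j(j+1)/2)` over `ZMod 3`, given by its coefficients: `(-1)^n` at the
triangular numbers `n`, and `0` elsewhere. -/
noncomputable def psi : (ZMod 3)⟦X⟧ :=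
  PowerSeries.mk fun n => if ∃ j, j * (j + 1) = 2 * n then (-1) ^ n else 0

/-- The generating function of `pod` modulo 3. -/
noncomputable def podSeries : (ZMod 3)⟦X⟧ := PowerSeries.mk fun n => (pod n : ZMod 3)

lemma coeff_neg_X_pow (d t : ℕ) :
    coeff d ((-X : (ZMod 3)⟦X⟧) ^ t) = if d = t then (-1) ^ d else 0 := by
  rw [neg_pow, show ((-1 : (ZMod 3)⟦X⟧)) ^ t = C ((-1) ^ t) by simp, coeff_C_mul, coeff_X_pow]
  split_ifs with h <;> simp [h]

lemma coeff_partial_psi (d N : ℕ) (h : d < N) :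
    coeff d (∑ j ∈ Finset.range N, (-X : (ZMod 3)⟦X⟧) ^ (j * (j + 1) / 2)) = coeff d psi := by
  simp only [map_sum, coeff_neg_X_pow, psi, coeff_mk]
  split_ifs with hj
  · obtain ⟨j, hj⟩ := hj
    rw [Finset.sum_eq_single j]
    · rw [if_pos (by omega)]
    · intro b _ hb
      rw [if_neg]
      intro hd
      have hb2 : 2 ∣ b * (b + 1) := (Nat.even_mul_succ_self b).two_dvd
      have : b * (b + 1) = j * (j + 1) := by omega
      apply hb
      rcases lt_trichotomy b j with hlt | heq | hlt
      · nlinarith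
      · exact heq
      · nlinarith
    · intro hn
      have : N ≤ j := by simpa using hn
      have : 2 * j ≤ j * (j + 1) := by nlinarith
      omega
  · refine Finset.sum_eq_zero fun b _ => if_neg fun hd => hj ⟨b, ?_⟩
    have hb2 : 2 ∣ b * (b + 1) := (Nat.even_mul_succ_self b).two_dvd
    omega

/-- The multiplicity character of partitions with distinct odd parts. -/
def podChar (i c : ℕ) : ZMod 3 := if Odd i → c ≤ 1 then 1 else 0

lemma podSeries_eq_genFun : podSeries = Nat.Partition.genFun podChar := by
  classical
  ext n
  rw [podSeries, coeff_mk, Nat.Partition.coeff_genFun, pod, Nat.card_eq_fintype_card,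
    Fintype.card_subtype, Finset.card_filter]
  push_cast
  refine Finset.sum_congr rfl fun p _ => ?_
  simp only [podChar, Finsupp.prod, Finset.prod_boole]
  simp

open scoped PowerSeries.WithPiTopology in
open PowerSeries.WithPiTopology in
/-- Gauss's identity in the form `(∑ pod(n) X^n) * ψ = 1`. With `q = -X`, Shanks's identity gives
`oddProd q n * ψ ≡ evenProd q 0 n` modulo `X^(2n+1)`, since all its summands with `s ≥ 1` vanish to
that order, while the first `2n` factors of the generating function multiply to
`oddProd q n / evenProd q 0 n`. -/
lemma podSeries_mul_psi : podSeries * psi = 1 := by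
  let _ : TopologicalSpace (ZMod 3) := ⊥
  have _ : DiscreteTopology (ZMod 3) := ⟨rfl⟩
  set F : ℕ → (ZMod 3)⟦X⟧ :=
    fun i => 1 + ∑' j, podChar (i + 1) (j + 1) • X ^ ((i + 1) * (j + 1)) with hF
  have hprod : HasProd F podSeries := by
    rw [podSeries_eq_genFun]
    exact Nat.Partition.hasProd_genFun podChar
  have hodd (k : ℕ) : F (2 * k) = 1 + X ^ (2 * k + 1) := by
    simp only [hF]
    rw [tsum_eq_single 0]
    · simp [podChar]
    · intro j hj
      simp [podChar, hj]
  have heven (k : ℕ) : F (2 * k + 1) * (1 - X ^ (2 * k + 2)) = 1 := by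
    have hc : constantCoeff ((X : (ZMod 3)⟦X⟧) ^ (2 * k + 2)) = 0 := by simp
    have : F (2 * k + 1) = ∑' j : ℕ, ((X : (ZMod 3)⟦X⟧) ^ (2 * k + 2)) ^ j := by
      rw [(summable_pow_of_constantCoeff_eq_zero hc).tsum_eq_zero_add]
      have : ¬ Odd (2 * k + 1 + 1) := by
        rw [Nat.not_odd_iff_even]
        exact ⟨k + 1, by ring⟩
      simp [hF, podChar, this, ← pow_mul]
    rw [this, tsum_pow_mul_one_sub_of_constantCoeff_eq_zero hc]
  have hfin (n : ℕ) : (∏ i ∈ Finset.range (2 * n), F i) * evenProd (-X) 0 n = oddProd (-X) n := by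
    induction n with
    | zero => simp [evenProd, oddProd]
    | succ n ih =>
      rw [show 2 * (n + 1) = 2 * n + 1 + 1 by ring, Finset.prod_range_succ,
        Finset.prod_range_succ, evenProd_succ_right _ (Nat.zero_le n), oddProd_succ, ← ih, hodd,
        Even.neg_pow ⟨n + 1, by ring⟩, Odd.neg_pow ⟨n, rfl⟩]
      linear_combination (∏ i ∈ Finset.range (2 * n), F i) * evenProd (-X) 0 n
        * (1 + X ^ (2 * n + 1)) * heven n
  have hunit (n : ℕ) : IsUnit (evenProd (-X : (ZMod 3)⟦X⟧) 0 n) := by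
    rw [PowerSeries.isUnit_iff_constantCoeff]
    simp [evenProd]
  have hdvd (n : ℕ) : (X : (ZMod 3)⟦X⟧) ^ (2 * n + 1) ∣
      (∏ i ∈ Finset.range (2 * n), F i) * psi - 1 := by
    have h1 : (X : (ZMod 3)⟦X⟧) ^ (2 * n + 1) ∣
        psi - ∑ j ∈ Finset.range (2 * n + 1), (-X : (ZMod 3)⟦X⟧) ^ (j * (j + 1) / 2) := by
      rw [X_pow_dvd_iff]
      intro d hd
      rw [map_sub, coeff_partial_psi d _ hd, sub_self]
    have h2 : (X : (ZMod 3)⟦X⟧) ^ (2 * n + 1) ∣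
        oddProd (-X) n * (∑ j ∈ Finset.range (2 * n + 1), (-X : (ZMod 3)⟦X⟧) ^ (j * (j + 1) / 2))
          - evenProd (-X) 0 n := by
      rw [← shanks_identity, Finset.sum_range_succ']
      have : shanksTerm (-X : (ZMod 3)⟦X⟧) n 0 = evenProd (-X) 0 n := by
        simp [shanksTerm, oddProd]
      rw [this, add_sub_cancel_right]
      refine Finset.dvd_sum fun s _ => Dvd.dvd.mul_left ?_ _
      rw [neg_pow]
      exact Dvd.dvd.mul_left (pow_dvd_pow _ (by nlinarith)) _
    rw [← (hunit n).dvd_mul_left]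
    have : evenProd (-X) 0 n * ((∏ i ∈ Finset.range (2 * n), F i) * psi - 1) =
        oddProd (-X) n * (psi - ∑ j ∈ Finset.range (2 * n + 1), (-X) ^ (j * (j + 1) / 2)) +
        (oddProd (-X) n * (∑ j ∈ Finset.range (2 * n + 1), (-X) ^ (j * (j + 1) / 2))
          - evenProd (-X) 0 n) := by
      linear_combination psi * hfin n
    rw [this]
    exact dvd_add (Dvd.dvd.mul_left h1 _) h2
  have hlim : Filter.Tendsto (fun n => (∏ i ∈ Finset.range (2 * n), F i) * psi) Filter.atTop
      (nhds (podSeries * psi)) := by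
    refine Filter.Tendsto.mul_const psi (hprod.tendsto_prod_nat.comp ?_)
    exact Filter.tendsto_id.const_mul_atTop' (by norm_num)
  refine tendsto_nhds_unique hlim ?_
  rw [tendsto_iff_coeff_tendsto]
  refine fun d => tendsto_atTop_of_eventually_const (i₀ := d) fun n hn => ?_
  have := X_pow_dvd_iff.mp (hdvd n) d (by omega)
  rwa [map_sub, sub_eq_zero] at this

/-! ### Dissection modulo 3 -/

/-- The substitution `E : X ↦ X^3`. -/
noncomputable def ex : (ZMod 3)⟦X⟧ →ₐ[ZMod 3] (ZMod 3)⟦X⟧ := PowerSeries.expand 3 (by norm_num)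

lemma cube_eq_ex (f : (ZMod 3)⟦X⟧) : f ^ 3 = ex f := by
  have h := MvPowerSeries.map_frobenius_expand (σ := Unit) (R := ZMod 3) 3 (by norm_num) (f := f)
  rw [← h, ZMod.frobenius_zmod, MvPowerSeries.map_id]
  rfl

lemma coeff_ex_mul (f : (ZMod 3)⟦X⟧) (m : ℕ) : coeff (3 * m) (ex f) = coeff m f :=
  coeff_expand_mul 3 _ f m

lemma coeff_ex_of_not_dvd (f : (ZMod 3)⟦X⟧) {m : ℕ} (h : ¬ 3 ∣ m) : coeff m (ex f) = 0 :=
  coeff_expand_of_not_dvd 3 _ f h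

lemma coeff_three_mul_add_one (f g h : (ZMod 3)⟦X⟧) (m : ℕ) :
    coeff (3 * m + 1) (ex f + X * ex g + X ^ 2 * ex h) = coeff m g := by
  rw [map_add, map_add, coeff_succ_X_mul, coeff_ex_mul, coeff_ex_of_not_dvd f (by omega), pow_two,
    mul_assoc, coeff_succ_X_mul]
  cases m with
  | zero => simp
  | succ m =>
    rw [show 3 * (m + 1) = 3 * m + 2 + 1 by ring, coeff_succ_X_mul, coeff_ex_of_not_dvd h (by omega)]
    simp

lemma coeff_three_mul_add_two (f g h : (ZMod 3)⟦X⟧) (m : ℕ) :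
    coeff (3 * m + 2) (ex f + X * ex g + X ^ 2 * ex h) = coeff m h := by
  rw [map_add, map_add, coeff_ex_of_not_dvd f (by omega), pow_two,
    mul_assoc, coeff_succ_X_mul, coeff_succ_X_mul, coeff_succ_X_mul, coeff_ex_mul,
    coeff_ex_of_not_dvd g (by omega)]
  simp

lemma coeff_psi_add_two (m : ℕ) : coeff (3 * m + 2) psi = 0 := by
  rw [psi, coeff_mk, if_neg]
  rintro ⟨j, hj⟩
  have h : (j * (j + 1)) % 3 = 1 := by omega
  have : j % 3 = 0 ∨ j % 3 = 1 ∨ j % 3 = 2 := by omega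
  rcases this with h0 | h0 | h0 <;> simp [Nat.mul_mod, Nat.add_mod, h0] at h

/-- The triangular numbers congruent to `1` modulo `3` are the `9t+1` with `t` triangular. -/
lemma coeff_psi_add_one (m : ℕ) : coeff (3 * m + 1) psi = - coeff m (ex psi) := by
  have key (j : ℕ) (hj : j * (j + 1) = 2 * (3 * m + 1)) :
      ∃ i, j = 3 * i + 1 ∧ 3 * (i * (i + 1)) = 2 * m := by
    have : j % 3 = 0 ∨ j % 3 = 1 ∨ j % 3 = 2 := by omega
    have h : (j * (j + 1)) % 3 = 2 := by omega
    rcases this with h0 | h0 | h0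
    · simp [Nat.mul_mod, Nat.add_mod, h0] at h
    · refine ⟨j / 3, by omega, ?_⟩
      obtain ⟨i, rfl⟩ : ∃ i, j = 3 * i + 1 := ⟨j / 3, by omega⟩
      rw [show (3 * i + 1) / 3 = i by omega]
      nlinarith
    · simp [Nat.mul_mod, Nat.add_mod, h0] at h
  by_cases hm : 3 ∣ m
  · obtain ⟨k, rfl⟩ := hm
    rw [coeff_ex_mul, psi, coeff_mk, coeff_mk]
    have hiff : (∃ j, j * (j + 1) = 2 * (3 * (3 * k) + 1)) ↔ ∃ j, j * (j + 1) = 2 * k := by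
      constructor
      · rintro ⟨j, hj⟩
        obtain ⟨i, -, hi⟩ := key j hj
        exact ⟨i, by omega⟩
      · rintro ⟨i, hi⟩
        exact ⟨3 * i + 1, by linear_combination 9 * hi⟩
    by_cases h : ∃ j, j * (j + 1) = 2 * k
    · rw [if_pos (hiff.mpr h), if_pos h, pow_succ, ← mul_assoc, pow_mul]
      norm_num [Odd.neg_one_pow]
    · rw [if_neg (hiff.not.mpr h), if_neg h, neg_zero]
  · rw [coeff_ex_of_not_dvd _ hm, psi, coeff_mk, if_neg]
    · simp
    · rintro ⟨j, hj⟩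
      obtain ⟨i, -, hi⟩ := key j hj
      omega

/-- Separating the exponents of `ψ` modulo 3. -/
lemma psi_dissection : ∃ A, psi = ex A - X * ex (ex psi) := by
  refine ⟨PowerSeries.mk fun m => coeff (3 * m) psi, ?_⟩
  ext d
  have e : ex (PowerSeries.mk fun m => coeff (3 * m) psi) - X * ex (ex psi) =
      ex (PowerSeries.mk fun m => coeff (3 * m) psi) + X * ex (-ex psi) + X ^ 2 * ex 0 := by
    simp [sub_eq_add_neg]
  obtain ⟨m, rfl | rfl | rfl⟩ : ∃ m, d = 3 * m ∨ d = 3 * m + 1 ∨ d = 3 * m + 2 :=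
    ⟨d / 3, by omega⟩
  · rw [map_sub, coeff_ex_mul, coeff_mk]
    cases m with
    | zero => simp
    | succ m =>
      rw [show 3 * (m + 1) = 3 * m + 2 + 1 by ring, coeff_succ_X_mul,
        coeff_ex_of_not_dvd _ (by omega), sub_zero]
  · rw [e, coeff_three_mul_add_one, coeff_psi_add_one, map_neg]
  · rw [e, coeff_three_mul_add_two, coeff_psi_add_two, map_zero]

/-! ### The congruences -/

lemma coeff_psi_sq_mul_ex (f : (ZMod 3)⟦X⟧) (m : ℕ) :
    coeff (3 * m + 2) (psi ^ 2 * ex f) = coeff m ((ex psi) ^ 2 * f) := by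
  obtain ⟨A, hA⟩ := psi_dissection
  have : psi ^ 2 * ex f = ex (A ^ 2 * f) + X * ex (-2 * A * ex psi * f)
      + X ^ 2 * ex ((ex psi) ^ 2 * f) := by
    simp only [map_mul, map_pow, map_neg, map_ofNat]
    linear_combination (psi + (ex A - X * ex (ex psi))) * ex f * hA
  rw [this, coeff_three_mul_add_two]

lemma psi_mul_ex_dissection (f : (ZMod 3)⟦X⟧) : ∃ B, psi * ex f =
    ex B + X * ex (-(ex psi * f)) + X ^ 2 * ex 0 := by
  obtain ⟨A, hA⟩ := psi_dissection
  refine ⟨A * f, ?_⟩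
  simp only [map_mul, map_neg, map_zero]
  linear_combination ex f * hA

/-- The series `C = ψ * (E ψ)^2`, whose `m`-th coefficient is `pod (9m+8)` modulo 3. -/
noncomputable def cSeries : (ZMod 3)⟦X⟧ := (ex psi) ^ 2 * psi

lemma cSeries_eq : cSeries = psi * ex (psi ^ 2) := by
  rw [cSeries, map_pow, mul_comm]

lemma pod_nine_mul_add_eight (m : ℕ) : (pod (9 * m + 8) : ZMod 3) = coeff m cSeries := by
  have hG := podSeries_mul_psi
  have h1 : podSeries = psi ^ 2 * ex podSeries := by
    rw [← cube_eq_ex]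
    linear_combination (-podSeries * (podSeries * psi + 1)) * hG
  have h2 : (ex psi) ^ 2 * podSeries = psi ^ 2 * ex psi := by
    rw [← cube_eq_ex]
    linear_combination psi ^ 5 * hG
  have : (pod (9 * m + 8) : ZMod 3) = coeff (3 * (3 * m + 2) + 2) podSeries := by
    rw [podSeries, coeff_mk]
    ring_nf
  rw [this, h1, coeff_psi_sq_mul_ex, h2, coeff_psi_sq_mul_ex, cSeries]

lemma coeff_cSeries_add_two (m : ℕ) : coeff (3 * m + 2) cSeries = 0 := by
  obtain ⟨B, hB⟩ := psi_mul_ex_dissection (psi ^ 2)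
  rw [cSeries_eq, hB, coeff_three_mul_add_two, map_zero]

lemma coeff_cSeries_nine (m : ℕ) : coeff (9 * m + 7) cSeries = - coeff m cSeries := by
  obtain ⟨B, hB⟩ := psi_mul_ex_dissection (psi ^ 2)
  have hC : cSeries = _ := cSeries_eq.trans hB
  conv_lhs => rw [show 9 * m + 7 = 3 * (3 * m + 2) + 1 by ring, hC, coeff_three_mul_add_one,
    map_neg, mul_comm (ex psi), coeff_psi_sq_mul_ex]
  rfl

/-- Induction on `β`: since `8 * (9m+7) + 7 = 9 * (8m+7)`, each step applies
`coeff_cSeries_nine`, and `β = 0` is `coeff_cSeries_add_two`. -/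
lemma coeff_cSeries_eq_zero (n β : ℕ) : ∀ M, 8 * M + 7 = 9 ^ β * (24 * n + 23) →
    coeff M cSeries = 0 := by
  induction β with
  | zero =>
    intro M hM
    obtain rfl : M = 3 * n + 2 := by omega
    exact coeff_cSeries_add_two n
  | succ β ih =>
    intro M hM
    rw [pow_succ', mul_assoc] at hM
    obtain ⟨M', rfl⟩ : ∃ M', M = 9 * M' + 7 := ⟨(M - 7) / 9, by omega⟩
    rw [coeff_cSeries_nine, ih M' (by omega), neg_zero]

theorem pod_congruence_family (α n : ℕ) (hα : 1 ≤ α) :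
    8 ∣ (23 * 3 ^ (2 * α) + 1) ∧
    pod (3 ^ (2 * α + 1) * n + (23 * 3 ^ (2 * α) + 1) / 8) ≡ 0 [MOD 3] := by
  obtain ⟨β, rfl⟩ : ∃ β, α = β + 1 := ⟨α - 1, by omega⟩
  have h9 : (9 : ℕ) ^ β % 8 = 1 := by simp [Nat.pow_mod]
  have e : (3 : ℕ) ^ (2 * (β + 1)) = 9 * 9 ^ β := by
    rw [pow_mul, pow_succ]
    ring
  rw [pow_succ, e]
  refine ⟨by omega, ?_⟩
  obtain ⟨k, hk⟩ : ∃ k, 9 ^ β = 8 * k + 1 := ⟨9 ^ β / 8, by omega⟩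
  have hN : 9 * 9 ^ β * 3 * n + (23 * (9 * 9 ^ β) + 1) / 8
      = 9 * (3 * (9 ^ β * n) + 23 * k + 2) + 8 := by
    rw [show (23 * (9 * 9 ^ β) + 1) / 8 = 9 * (23 * k + 2) + 8 by omega]
    ring
  rw [hN, ← ZMod.natCast_eq_natCast_iff, pod_nine_mul_add_eight, Nat.cast_zero]
  refine coeff_cSeries_eq_zero n β _ ?_
  rw [hk]
  ring
end

section
/- For all integers α ≥ 1 and n ≥ 0, p̄_o(3^{2α}·(3n+1)) ≡ 0 (mod 6). -/
/-!
Write `φ(q) = ∑ q ^ (x²)` over the integers `x`, and `P = ∑ pbarOdd n qⁿ = ∏ (1 + qⁱ) / (1 - qⁱ)` over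
odd `i`.

Modulo 2 the product is 1, so `pbarOdd n` is even for `n ≠ 0` (`two_dvd_pbarOdd`).

For the modulus 3, the Gauss identity `φ(-q) = ∏ (1 - qⁱ) / (1 + qⁱ)` over all `i` (`gauss`, deduced from
the finite Shanks identity `shanks`) gives `P φ(-q) = φ(-q²)` (`pbarOddSeries_mul_theta`). Modulo 3 one
has `φ(-q)³ = φ(-q³)`, hence `P φ(-q³) = φ(-q²) φ(-q)²`. Let `U` be the operator
`∑ a(n) qⁿ ↦ ∑ a(3n) qⁿ`. Counting vectors on the isotropic lines of `2x² + y² + z²` over the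
field with three elements shows `U (φ(-q²) φ(-q)²) = φ(q) φ(-q²) φ(-q³)` modulo 3
(`coeff_three_mul_theta`), so that `U(P) φ(-q) = φ(q) φ(-q²) φ(-q)³`. Together with
`φ(q) φ(-q) = φ(-q²)²` (`theta_mul_theta`) this yields `U(P) = φ(-q) φ(-q²)³ = φ(-q) φ(-q⁶)`
(`pbarOdd_three_mul`): modulo 3, `pbarOdd (3 n)` is a signed count of the representations
`n = x² + 6y²`. A descent shows that `3 ^ (2α - 1) * (3n + 1)` has no such representation (`no_rep`).
-/

open PowerSeries

/-- `pbarOdd n` is the number of overpartitions of `n` into odd parts: pairs `(μ, ν)` of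
partitions into odd parts with total size `n`, where `μ` has distinct parts. -/
noncomputable def pbarOdd (n : ℕ) : ℕ :=
  Nat.card {p : Multiset ℕ × Multiset ℕ //
    p.1.Nodup ∧ (∀ i ∈ p.1, Odd i) ∧ (∀ i ∈ p.2, Odd i) ∧ p.1.sum + p.2.sum = n}

open Finset

/-! ### Weighted generating series and theta series -/

section Weighted
variable {R : Type*} [CommRing R]

/-- The generating series `∑ i, s i * X ^ w i`. It is meaningful when `w` has finite fibres; a
coefficient belonging to an infinite fibre may be the junk value of `finsum`. -/
noncomputable def weightedSeries {ι : Type*} (w : ι → ℕ) (s : ι → R) : R⟦X⟧ :=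
  PowerSeries.mk fun n ↦ ∑ᶠ i ∈ {i | w i = n}, s i

/-- Each weight is attained only finitely often. -/
def FiniteFibers {ι : Type*} (w : ι → ℕ) : Prop := ∀ n, {i | w i = n}.Finite

lemma FiniteFibers.coeff {ι : Type*} {w : ι → ℕ} (hw : FiniteFibers w) (s : ι → R) (n : ℕ) :
    coeff n (weightedSeries w s) = ∑ i ∈ (hw n).toFinset, s i := by
  rw [weightedSeries, coeff_mk, finsum_mem_eq_finite_toFinset_sum]

lemma FiniteFibers.add {ι κ : Type*} {w : ι → ℕ} {v : κ → ℕ} (hw : FiniteFibers w)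
    (hv : FiniteFibers v) : FiniteFibers fun p : ι × κ ↦ w p.1 + v p.2 := by
  intro n
  refine (((Set.finite_Iic n).biUnion fun a _ ↦ hw a).prod
    ((Set.finite_Iic n).biUnion fun a _ ↦ hv a)).subset ?_
  rintro ⟨i, j⟩ h
  simp only [Set.mem_ofPred_eq] at h
  simp only [Set.mem_prod, Set.mem_iUnion, Set.mem_ofPred_eq, Set.mem_Iic, exists_prop]
  exact ⟨⟨_, by omega, rfl⟩, ⟨_, by omega, rfl⟩⟩

lemma FiniteFibers.mul {ι κ : Type*} {w : ι → ℕ} {v : κ → ℕ} (hw : FiniteFibers w)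
    (hv : FiniteFibers v) (s : ι → R) (t : κ → R) :
    weightedSeries w s * weightedSeries v t =
      weightedSeries (fun p : ι × κ ↦ w p.1 + v p.2) (fun p ↦ s p.1 * t p.2) := by
  ext n
  rw [coeff_mul, (hw.add hv).coeff,
    ← Finset.sum_fiberwise_of_maps_to (s := ((hw.add hv) n).toFinset) (t := antidiagonal n)
      (g := fun p ↦ (w p.1, v p.2))]
  · refine sum_congr rfl fun ab hab ↦ ?_
    rw [hw.coeff, hv.coeff, sum_mul_sum, ← sum_product']
    refine sum_congr ?_ fun _ _ ↦ rfl
    ext ⟨i, j⟩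
    rw [HasAntidiagonal.mem_antidiagonal] at hab
    simp only [mem_product, Set.Finite.mem_toFinset, Set.mem_ofPred_eq, mem_filter, Prod.ext_iff]
    omega
  · intro p hp
    simpa using hp

/-- The sign `(-1) ^ x` of an integer `x`, with values in `R`. -/
noncomputable def paritySign (x : ℤ) : R := if Even x then 1 else -1

/-- The theta series `∑ x : ℤ, s x * X ^ (m * x ^ 2)`. With `φ(q) = ∑ q ^ (x ^ 2)`, the series
`theta m 1` is `φ(q ^ m)` and `theta m paritySign` is `φ(-q ^ m)`. -/
noncomputable def theta (m : ℕ) (s : ℤ → R) : R⟦X⟧ :=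
  weightedSeries (fun x : ℤ ↦ m * x.natAbs ^ 2) s

lemma finiteFibers_sq {m : ℕ} (hm : 0 < m) : FiniteFibers fun x : ℤ ↦ m * x.natAbs ^ 2 := by
  intro n
  refine (Set.finite_Icc (-n : ℤ) n).subset fun x hx ↦ ?_
  have h1 : x.natAbs ≤ x.natAbs ^ 2 := Nat.le_self_pow two_ne_zero _
  have h2 : x.natAbs ^ 2 ≤ m * x.natAbs ^ 2 := Nat.le_mul_of_pos_left _ hm
  have h3 : m * x.natAbs ^ 2 = n := hx
  rw [Set.mem_Icc]
  omega

/-- `φ(q) φ(-q) = φ(-q²)²`: the terms with `x + y` odd cancel under swapping `x` and `y`, and the others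
are parametrized by `x = u + v`, `y = u - v`. -/
lemma theta_mul_theta :
    theta 1 1 * theta 1 paritySign = (theta 2 paritySign * theta 2 paritySign : R⟦X⟧) := by
  have h1 := finiteFibers_sq one_pos
  have h2 := finiteFibers_sq two_pos
  unfold theta
  rw [h1.mul h1, h2.mul h2]
  ext n
  rw [(h1.add h1).coeff, (h2.add h2).coeff, ← sum_filter_add_sum_filter_not _
    (fun p : ℤ × ℤ ↦ Even (p.1 + p.2))]
  have hodd : ∑ p ∈ ((h1.add h1) n).toFinset with ¬ Even (p.1 + p.2),
      ((1 : ℤ → R) p.1 * paritySign p.2) = 0 := by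
    refine sum_involution (fun p _ ↦ p.swap) ?_ ?_ ?_ ?_
    · rintro ⟨x, y⟩ h
      have h' := (mem_filter.1 h).2
      simp only [Int.even_add] at h'
      by_cases hx : Even x <;> by_cases hy : Even y <;> simp [hx, hy, paritySign] at h' ⊢
    · rintro ⟨x, y⟩ h _ he
      have h' := (mem_filter.1 h).2
      simp only [Prod.swap_prod_mk, Prod.mk.injEq] at he
      apply h'
      simp [he.1]
    · rintro ⟨x, y⟩ h
      simp only [mem_filter, Set.Finite.mem_toFinset, Set.mem_ofPred_eq, Prod.fst_swap,
        Prod.snd_swap] at h ⊢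
      rw [add_comm y x, add_comm (1 * y.natAbs ^ 2)]
      exact h
    · simp
  rw [hodd, add_zero]
  refine (sum_nbij' (fun p ↦ (p.1 + p.2, p.1 - p.2))
    (fun p ↦ ((p.1 + p.2) / 2, (p.1 - p.2) / 2)) ?_ ?_ ?_ ?_ ?_).symm
  · rintro ⟨u, v⟩ h
    simp only [mem_filter, Set.Finite.mem_toFinset, Set.mem_ofPred_eq] at h ⊢
    refine ⟨?_, ⟨u, by ring⟩⟩
    zify at h ⊢
    simp only [sq_abs] at h ⊢
    linarith
  · rintro ⟨x, y⟩ h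
    simp only [mem_filter, Set.Finite.mem_toFinset, Set.mem_ofPred_eq] at h ⊢
    obtain ⟨h, u, hu⟩ := h
    obtain rfl : x = 2 * u - y := by omega
    have e1 : (2 * u - y + y) / 2 = u := by omega
    have e2 : (2 * u - y - y) / 2 = u - y := by omega
    rw [e1, e2]
    zify at h ⊢
    simp only [sq_abs] at h ⊢
    linarith
  · rintro ⟨u, v⟩ h
    ext <;> simp <;> omega
  · rintro ⟨x, y⟩ h
    obtain ⟨u, hu⟩ := (mem_filter.1 h).2
    ext <;> simp <;> simp at hu <;> omega
  · rintro ⟨u, v⟩ h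
    simp only [Pi.one_apply, one_mul, paritySign, Int.even_sub]
    by_cases hx : Even u <;> by_cases hy : Even v <;> simp [hx, hy]

end Weighted

/-- The diagonal ternary quadratic form `a x² + b y² + c z²`. -/
def sqWeight (a b c : ℕ) (p : ℤ × ℤ × ℤ) : ℕ :=
  a * p.1.natAbs ^ 2 + (b * p.2.1.natAbs ^ 2 + c * p.2.2.natAbs ^ 2)

lemma finiteFibers_sqWeight {a b c : ℕ} (ha : 0 < a) (hb : 0 < b) (hc : 0 < c) :
    FiniteFibers (sqWeight a b c) :=
  (finiteFibers_sq ha).add ((finiteFibers_sq hb).add (finiteFibers_sq hc))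

lemma theta_mul_three {R : Type*} [CommRing R] {a b c : ℕ} (ha : 0 < a) (hb : 0 < b) (hc : 0 < c)
    (s t u : ℤ → R) : theta a s * (theta b t * theta c u) =
      weightedSeries (sqWeight a b c) fun p ↦ s p.1 * (t p.2.1 * u p.2.2) := by
  unfold theta
  rw [(finiteFibers_sq hb).mul (finiteFibers_sq hc),
    (finiteFibers_sq ha).mul ((finiteFibers_sq hb).add (finiteFibers_sq hc))]
  rfl

/-- The form `2x² + y² + z²` restricted to the vectors lying modulo 3 on the isotropic line `x = ε y`,
`z = 0`, divided by 3, is equivalent to `u² + 2t² + 3s²` through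
`(x, y, z) = (u + t, ε (u - 2t), 3s)`. -/
lemma sum_isotropic_line {R : Type*} [CommRing R] {n : ℕ} {F G : Finset (ℤ × ℤ × ℤ)}
    (hF : ∀ p, p ∈ F ↔ 2 * p.1 ^ 2 + p.2.1 ^ 2 + p.2.2 ^ 2 = 3 * (n : ℤ))
    (hG : ∀ p, p ∈ G ↔ p.1 ^ 2 + 2 * p.2.1 ^ 2 + 3 * p.2.2 ^ 2 = (n : ℤ))
    {ε : ℤ} (hε : ε * ε = 1) :
    (∑ p ∈ F with 3 ∣ p.1 - ε * p.2.1 ∧ 3 ∣ p.2.2,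
        paritySign p.1 * (paritySign p.2.1 * paritySign p.2.2) : R) =
      ∑ p ∈ G, paritySign p.2.1 * paritySign p.2.2 := by
  have hε2 : ε = 1 ∨ ε = -1 := by
    exact Int.eq_one_or_neg_one_of_mul_eq_one hε
  refine (sum_nbij' (fun p ↦ (p.1 + p.2.1, ε * (p.1 - 2 * p.2.1), 3 * p.2.2))
    (fun p ↦ (p.1 - (p.1 - ε * p.2.1) / 3, (p.1 - ε * p.2.1) / 3, p.2.2 / 3)) ?_ ?_ ?_ ?_ ?_).symm
  · rintro ⟨u, t, s⟩ h
    rw [hG] at h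
    simp only at h
    rw [mem_filter, hF]
    refine ⟨?_, ⟨t, ?_⟩, ⟨s, rfl⟩⟩
    · rcases hε2 with rfl | rfl <;> simp only <;> linarith
    · rcases hε2 with rfl | rfl <;> simp only <;> ring
  · rintro ⟨x, y, z⟩ h
    rw [mem_filter, hF] at h
    simp only at h
    obtain ⟨h, ⟨t, ht⟩, s, rfl⟩ := h
    rw [hG]
    simp only [ht]
    obtain rfl : x = 3 * t + ε * y := by linarith
    rw [Int.mul_ediv_cancel_left _ three_ne_zero, Int.mul_ediv_cancel_left _ three_ne_zero]
    rcases hε2 with rfl | rfl <;> linarith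
  · rintro ⟨u, t, s⟩ h
    have : u + t - ε * (ε * (u - 2 * t)) = 3 * t := by rw [← mul_assoc, hε]; ring
    simp [this]
  · rintro ⟨x, y, z⟩ h
    rw [mem_filter] at h
    simp only at h
    obtain ⟨-, ⟨t, ht⟩, ⟨s, rfl⟩⟩ := h
    have hx : x = 3 * t + ε * y := by linarith
    simp only [ht, Int.mul_ediv_cancel_left _ (three_ne_zero : (3 : ℤ) ≠ 0), Prod.mk.injEq]
    refine ⟨by ring, ?_, trivial⟩
    rcases hε2 with rfl | rfl <;> linarith
  · rintro ⟨u, t, s⟩ h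
    rcases hε2 with rfl | rfl <;>
    by_cases hx : Even u <;> by_cases hy : Even t <;> by_cases hz : Even s <;>
      simp [paritySign, Int.even_add, Int.even_sub, Int.even_mul, hx, hy, hz,
        (by decide : ¬ Even (3 : ℤ))]

/-- Modulo 3, the series with coefficients those of `φ(-q²) φ(-q)²` at multiples of 3 is
`φ(q) φ(-q²) φ(-q³)`. The form `2x² + y² + z²` has four isotropic lines modulo 3, and a vector of norm
divisible by 3 lies on exactly one of them, or on all four. -/
lemma coeff_three_mul_theta (n : ℕ) :
    coeff (3 * n) (theta 2 paritySign * (theta 1 paritySign * theta 1 paritySign) : (ZMod 3)⟦X⟧) =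
      coeff n (theta 1 1 * (theta 2 paritySign * theta 3 paritySign) : (ZMod 3)⟦X⟧) := by
  rw [theta_mul_three two_pos one_pos one_pos, theta_mul_three one_pos two_pos three_pos,
    (finiteFibers_sqWeight two_pos one_pos one_pos).coeff,
    (finiteFibers_sqWeight one_pos two_pos three_pos).coeff]
  set F := (finiteFibers_sqWeight two_pos one_pos one_pos (3 * n)).toFinset with hFdef
  set G := (finiteFibers_sqWeight one_pos two_pos three_pos n).toFinset with hGdef
  have hF : ∀ p, p ∈ F ↔ 2 * p.1 ^ 2 + p.2.1 ^ 2 + p.2.2 ^ 2 = 3 * (n : ℤ) := by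
    intro p
    rw [hFdef, Set.Finite.mem_toFinset, Set.mem_ofPred_eq, sqWeight]
    zify
    simp only [sq_abs, one_mul, add_assoc]
  have hG : ∀ p, p ∈ G ↔ p.1 ^ 2 + 2 * p.2.1 ^ 2 + 3 * p.2.2 ^ 2 = (n : ℤ) := by
    intro p
    rw [hGdef, Set.Finite.mem_toFinset, Set.mem_ofPred_eq, sqWeight]
    zify
    simp only [sq_abs, one_mul, add_assoc]
  set f : ℤ × ℤ × ℤ → ZMod 3 := fun p ↦ paritySign p.1 * (paritySign p.2.1 * paritySign p.2.2)
    with hf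
  have hswap : ∀ ε : ℤ, ∑ p ∈ F with 3 ∣ p.1 - ε * p.2.2 ∧ 3 ∣ p.2.1, f p =
      ∑ p ∈ F with 3 ∣ p.1 - ε * p.2.1 ∧ 3 ∣ p.2.2, f p := by
    intro ε
    refine sum_nbij' (fun p ↦ (p.1, p.2.2, p.2.1)) (fun p ↦ (p.1, p.2.2, p.2.1)) ?_ ?_ ?_ ?_ ?_
    · rintro ⟨x, y, z⟩ h
      rw [mem_filter, hF] at h ⊢
      exact ⟨by linarith [h.1], h.2⟩
    · rintro ⟨x, y, z⟩ h
      rw [mem_filter, hF] at h ⊢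
      exact ⟨by linarith [h.1], h.2⟩
    · intros; rfl
    · intros; rfl
    · rintro ⟨x, y, z⟩ h
      simp only [hf]
      ring
  have h1 := sum_isotropic_line (R := ZMod 3) hF hG (ε := 1) (by norm_num)
  have h2 := sum_isotropic_line (R := ZMod 3) hF hG (ε := -1) (by norm_num)
  have h3 := (hswap 1).trans h1
  have h4 := (hswap (-1)).trans h2
  have hpt : ∀ p ∈ F, f p = (if 3 ∣ p.1 - 1 * p.2.1 ∧ 3 ∣ p.2.2 then f p else 0) +
      (if 3 ∣ p.1 - (-1) * p.2.1 ∧ 3 ∣ p.2.2 then f p else 0) +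
      (if 3 ∣ p.1 - 1 * p.2.2 ∧ 3 ∣ p.2.1 then f p else 0) +
      (if 3 ∣ p.1 - (-1) * p.2.2 ∧ 3 ∣ p.2.1 then f p else 0) := by
    rintro ⟨x, y, z⟩ h
    rw [hF] at h
    generalize f (x, y, z) = c
    have hc : c = c + c + c + c := by
      have : (3 : ZMod 3) = 0 := rfl
      linear_combination -c * this
    simp only at h ⊢
    -- The zeros of `2x² + y² + z²` modulo 3 are found by inspecting residues.
    have hmod : (2 * (x % 3) ^ 2 + (y % 3) ^ 2 + (z % 3) ^ 2) % 3 = 0 := by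
      have : (2 * (x % 3) ^ 2 + (y % 3) ^ 2 + (z % 3) ^ 2) ≡ 2 * x ^ 2 + y ^ 2 + z ^ 2 [ZMOD 3] := by
        gcongr <;> exact Int.mod_modEq _ _
      rw [this, h]
      simp
    have hx : x % 3 = 0 ∨ x % 3 = 1 ∨ x % 3 = 2 := by omega
    have hy : y % 3 = 0 ∨ y % 3 = 1 ∨ y % 3 = 2 := by omega
    have hz : z % 3 = 0 ∨ z % 3 = 1 ∨ z % 3 = 2 := by omega
    simp only [Int.dvd_iff_emod_eq_zero]
    rcases hx with hx | hx | hx <;> rcases hy with hy | hy | hy <;> rcases hz with hz | hz | hz <;>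
      simp only [hx, hy, hz] at hmod <;> (try norm_num at hmod) <;>
      split_ifs <;> first | omega | exact hc | simp
  have hsum := sum_congr rfl hpt
  rw [sum_add_distrib, sum_add_distrib, sum_add_distrib, ← sum_filter, ← sum_filter, ← sum_filter,
    ← sum_filter, h1, h2, h3, h4] at hsum
  rw [hsum]
  have : (3 : ZMod 3) = 0 := rfl
  simp only [Pi.one_apply, one_mul]
  linear_combination (∑ p ∈ G, paritySign p.2.1 * paritySign p.2.2 : ZMod 3) * this

/-! ### The Gauss product for the theta series -/

section Gauss
variable {R : Type*} [CommRing R]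

/-- The telescoping step behind `shanks`. -/
lemma shanks_step (x : R) (n m : ℕ) (hm : m ≤ n) :
    ∑ t ∈ range m, ((-1) ^ (t + 1) * 2 * x ^ ((t + 1) * (n + 2)) *
        (∏ i ∈ range t, (1 + x ^ (i + 1))) * ∏ i ∈ Ico (t + 1) (n + 1), (1 - x ^ (i + 1))) =
      (1 + x ^ (n + 1)) * ∑ t ∈ range m, ((-1) ^ (t + 1) * 2 * x ^ ((t + 1) * (n + 1)) *
        (∏ i ∈ range t, (1 + x ^ (i + 1))) * ∏ i ∈ Ico (t + 1) n, (1 - x ^ (i + 1))) +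
      2 * x ^ (n + 1) * ∏ i ∈ Ico 0 n, (1 - x ^ (i + 1)) -
      (-1) ^ m * 2 * x ^ ((m + 1) * (n + 1)) * (∏ i ∈ range m, (1 + x ^ (i + 1))) *
        ∏ i ∈ Ico m n, (1 - x ^ (i + 1)) := by
  induction m with
  | zero => simp
  | succ m ih =>
    rw [sum_range_succ, sum_range_succ, ih (by omega), prod_Ico_succ_top (by omega),
      prod_eq_prod_Ico_succ_bot (show m < n by omega), prod_range_succ]
    ring

/-- The finite form, due to Shanks, of the Gauss identity `φ(-q) = ∏ (1 - qⁱ) / (1 + qⁱ)`. -/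
lemma shanks (x : R) (n : ℕ) :
    (∏ i ∈ range n, (1 + x ^ (i + 1))) * (1 + 2 * ∑ j ∈ range n, (-1) ^ (j + 1) * x ^ ((j + 1) ^ 2)) =
      ∏ i ∈ Ico 0 n, (1 - x ^ (i + 1)) + ∑ t ∈ range n, ((-1) ^ (t + 1) * 2 *
        x ^ ((t + 1) * (n + 1)) *
        (∏ i ∈ range t, (1 + x ^ (i + 1))) * ∏ i ∈ Ico (t + 1) n, (1 - x ^ (i + 1))) := by
  induction n with
  | zero => simp
  | succ n ih =>
    rw [sum_range_succ _ n, sum_range_succ _ n, shanks_step x n n le_rfl, Ico_self, Ico_self,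
      prod_Ico_succ_top (by omega), prod_range_succ]
    linear_combination (1 + x ^ (n + 1)) * ih

lemma shanks_dvd (x : R) (n : ℕ) : x ^ (n + 1) ∣
    (∏ i ∈ range n, (1 + x ^ (i + 1))) *
      (1 + 2 * ∑ j ∈ range n, (-1) ^ (j + 1) * x ^ ((j + 1) ^ 2)) -
    ∏ i ∈ range n, (1 - x ^ (i + 1)) := by
  rw [shanks, range_eq_Ico, add_sub_cancel_left]
  refine dvd_sum fun t _ ↦ ?_
  have : x ^ (n + 1) ∣ x ^ ((t + 1) * (n + 1)) := pow_dvd_pow _ (Nat.le_mul_of_pos_left _ (by omega))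
  exact ((this.mul_left _).mul_right _).mul_right _

lemma coeff_partial_theta {m : ℕ} (hm : 0 < m) {n k : ℕ} (hk : k ≤ n) :
    coeff k (1 + 2 * ∑ j ∈ range n, (-1) ^ (j + 1) * (X ^ m) ^ ((j + 1) ^ 2) : R⟦X⟧) =
      coeff k (theta m paritySign : R⟦X⟧) := by
  have h1 : (1 + 2 * ∑ j ∈ range n, (-1) ^ (j + 1) * (X ^ m) ^ ((j + 1) ^ 2) : R⟦X⟧) =
      ∑ x ∈ Icc (-n : ℤ) n, C (paritySign x) * X ^ (m * x.natAbs ^ 2) := by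
    clear hk
    induction n with
    | zero => simp [paritySign]
    | succ n ih =>
      have : Icc (-(n + 1 : ℕ) : ℤ) (n + 1 : ℕ) =
          insert (n + 1 : ℤ) (insert (-(n + 1 : ℤ)) (Icc (-n : ℤ) n)) := by
        ext x
        simp only [mem_Icc, mem_insert]
        omega
      rw [this, sum_insert (by simp; omega), sum_insert (by simp), ← ih, sum_range_succ]
      have e1 : ((n : ℤ) + 1).natAbs = n + 1 := by omega
      have e2 : (-((n : ℤ) + 1)).natAbs = n + 1 := by omega
      have e3 : (C (paritySign ((n : ℤ) + 1)) : R⟦X⟧) = (-1) ^ (n + 1) := by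
        rw [paritySign]
        by_cases h : Even (n + 1)
        · rw [h.neg_one_pow, if_pos (by exact_mod_cast h), map_one]
        · rw [(Nat.not_even_iff_odd.1 h).neg_one_pow, if_neg (by exact_mod_cast h), map_neg, map_one]
      have e4 : (C (paritySign (-((n : ℤ) + 1))) : R⟦X⟧) = (-1) ^ (n + 1) := by
        rw [← e3, paritySign, paritySign]
        simp only [even_neg]
      rw [e1, e2, e3, e4, pow_mul]
      ring
  rw [h1, theta, (finiteFibers_sq hm).coeff, map_sum]
  simp only [coeff_C_mul, coeff_X_pow, mul_ite, mul_one, mul_zero]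
  rw [← sum_filter]
  refine sum_congr ?_ fun _ _ ↦ rfl
  ext x
  simp only [mem_filter, mem_Icc, Set.Finite.mem_toFinset, Set.mem_ofPred_eq]
  refine ⟨fun h ↦ h.2.symm, fun h ↦ ⟨?_, h.symm⟩⟩
  have h1 : x.natAbs ≤ x.natAbs ^ 2 := Nat.le_self_pow two_ne_zero _
  have h2 : x.natAbs ^ 2 ≤ m * x.natAbs ^ 2 := Nat.le_mul_of_pos_left _ hm
  omega

open WithPiTopology Filter Topology

lemma tendsto_order_pow {f : ℕ → ℕ} (hf : ∀ n, n ≤ f n) (c : R) :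
    Tendsto (fun i ↦ (C c * X ^ f i : R⟦X⟧).order) atTop (𝓝 ⊤) := by
  refine ENat.tendsto_nhds_top_iff_natCast_lt.mpr fun n ↦ eventually_atTop.mpr ⟨n + 1, ?_⟩
  intro m hm
  refine lt_of_lt_of_le ?_ (nat_le_order _ (f m) ?_)
  · have := hf m
    norm_cast
    omega
  · intro i hi
    simp [coeff_X_pow, hi.ne]

lemma multipliable_pow [TopologicalSpace R] {f : ℕ → ℕ} (hf : ∀ n, n ≤ f n) (c : R) :
    Multipliable fun i ↦ (1 + C c * X ^ f i : R⟦X⟧) :=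
  multipliable_one_add_of_tendsto_order_atTop_nhds_top R (tendsto_order_pow hf c)

lemma multipliable_add [TopologicalSpace R] {f : ℕ → ℕ} (hf : ∀ n, n ≤ f n) :
    Multipliable fun i ↦ (1 + X ^ f i : R⟦X⟧) := by
  simpa using multipliable_pow hf (1 : R)

lemma multipliable_sub [TopologicalSpace R] {f : ℕ → ℕ} (hf : ∀ n, n ≤ f n) :
    Multipliable fun i ↦ (1 - X ^ f i : R⟦X⟧) := by
  simpa [sub_eq_add_neg] using multipliable_pow hf (-1 : R)

variable [TopologicalSpace R] [DiscreteTopology R]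

/-- The Gauss identity `φ(-q) ∏ (1 + qⁱ) = ∏ (1 - qⁱ)`, with `q ^ m` in place of `q`. -/
lemma gauss {m : ℕ} (hm : 0 < m) {A B : R⟦X⟧}
    (hA : HasProd (fun i : ℕ ↦ 1 + X ^ (m * (i + 1))) A)
    (hB : HasProd (fun i : ℕ ↦ 1 - X ^ (m * (i + 1))) B) :
    A * theta m paritySign = B := by
  have hθ : Tendsto (fun n : ℕ ↦ (1 + 2 * ∑ j ∈ range n, (-1) ^ (j + 1) * (X ^ m) ^ ((j + 1) ^ 2) :
      R⟦X⟧)) atTop (𝓝 (theta m paritySign)) := by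
    rw [tendsto_iff_coeff_tendsto]
    intro k
    refine tendsto_const_nhds.congr' ?_
    filter_upwards [eventually_ge_atTop k] with n hn
    exact (coeff_partial_theta hm hn).symm
  have h0 := (hA.tendsto_prod_nat.mul hθ).sub hB.tendsto_prod_nat
  have h1 : Tendsto (fun n : ℕ ↦ (∏ i ∈ range n, (1 + X ^ (m * (i + 1)))) *
      (1 + 2 * ∑ j ∈ range n, (-1) ^ (j + 1) * (X ^ m) ^ ((j + 1) ^ 2)) -
      ∏ i ∈ range n, (1 - X ^ (m * (i + 1))) : ℕ → R⟦X⟧) atTop (𝓝 0) := by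
    rw [tendsto_iff_coeff_tendsto]
    intro k
    refine tendsto_const_nhds.congr' ?_
    filter_upwards [eventually_ge_atTop k] with n hn
    have := shanks_dvd (X ^ m : R⟦X⟧) n
    simp only [← pow_mul X m (_ + 1)] at this
    rw [X_pow_dvd_iff] at this
    rw [map_zero, this]
    nlinarith
  exact sub_eq_zero.1 (tendsto_nhds_unique h0 h1)

lemma constantCoeff_hasProd {f : ℕ → R⟦X⟧} {A : R⟦X⟧} (h : HasProd f A)
    (hf : ∀ i, constantCoeff (f i) = 1) : constantCoeff A = 1 := by
  have := h.map (constantCoeff (R := R)) (continuous_constantCoeff R)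
  have h2 : (constantCoeff (R := R)) ∘ f = fun _ ↦ 1 := funext hf
  rw [h2] at this
  exact this.unique hasProd_one

end Gauss

/-! ### The generating function of overpartitions into odd parts -/

section GeneratingFunction

/-- The partitions of `n` into distinct odd parts. -/
def oddDistinct (n : ℕ) : Finset n.Partition := {p | (∀ i ∈ p.parts, Odd i) ∧ p.parts.Nodup}

lemma pbarOdd_eq_sum (n : ℕ) : pbarOdd n = ∑ ab ∈ antidiagonal n,
    #(oddDistinct ab.1) * #(Nat.Partition.restricted ab.2 Odd) := by
  simp_rw [← card_product]
  rw [← card_sigma, pbarOdd, ← Nat.card_eq_finsetCard]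
  symm
  refine Nat.card_eq_of_bijective (fun x ↦ ⟨(x.1.2.1.parts, x.1.2.2.parts), ?_⟩) ⟨?_, ?_⟩
  · obtain ⟨⟨⟨a, b⟩, p, q⟩, h⟩ := x
    simp only [mem_sigma, HasAntidiagonal.mem_antidiagonal, mem_product, oddDistinct,
      Nat.Partition.restricted, mem_filter, mem_univ, true_and] at h
    refine ⟨h.2.1.2, h.2.1.1, h.2.2, ?_⟩
    rw [p.parts_sum, q.parts_sum, h.1]
  · rintro ⟨⟨⟨a, b⟩, p, q⟩, h⟩ ⟨⟨⟨a', b'⟩, p', q'⟩, h'⟩ he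
    simp only [Subtype.mk.injEq, Prod.mk.injEq] at he
    obtain rfl : a = a' := p.parts_sum.symm.trans ((congrArg _ he.1).trans p'.parts_sum)
    obtain rfl : b = b' := q.parts_sum.symm.trans ((congrArg _ he.2).trans q'.parts_sum)
    obtain rfl : p = p' := Nat.Partition.ext he.1
    obtain rfl : q = q' := Nat.Partition.ext he.2
    rfl
  · rintro ⟨⟨μ, ν⟩, h1, h2, h3, h4⟩
    refine ⟨⟨⟨(μ.sum, ν.sum), ⟨μ, fun {i} hi ↦ (h2 i hi).pos, rfl⟩,
      ⟨ν, fun {i} hi ↦ (h3 i hi).pos, rfl⟩⟩, ?_⟩, rfl⟩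
    simp only [mem_sigma, HasAntidiagonal.mem_antidiagonal, mem_product, oddDistinct,
      Nat.Partition.restricted, mem_filter, mem_univ, true_and]
    exact ⟨h4, ⟨h2, h1⟩, h3⟩

open WithPiTopology Filter Topology

variable (R : Type*) [CommRing R]

/-- The generating series of `pbarOdd`, with coefficients in `R`. -/
noncomputable def pbarOddSeries : R⟦X⟧ := PowerSeries.mk fun n ↦ (pbarOdd n : R)

lemma pbarOddSeries_eq_mul : pbarOddSeries R = (PowerSeries.mk fun n ↦ (#(oddDistinct n) : R)) *
    PowerSeries.mk fun n ↦ (#(Nat.Partition.restricted n Odd) : R) := by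
  ext n
  rw [pbarOddSeries, coeff_mul, coeff_mk, pbarOdd_eq_sum]
  push_cast
  simp only [coeff_mk]

variable [TopologicalSpace R]

variable {R} in
lemma hasProd_odd_iff {f : ℕ → R⟦X⟧} {A : R⟦X⟧} :
    HasProd (fun i ↦ if Odd (i + 1) then f i else 1) A ↔ HasProd (fun k ↦ f (2 * k)) A := by
  have hinj : Function.Injective (fun k : ℕ ↦ 2 * k) := fun a b h ↦ by simpa using h
  rw [← hinj.hasProd_iff]
  · refine iff_of_eq (congrArg (HasProd · A) ?_)
    funext k
    simp
  · intro i hi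
    rw [if_neg]
    rintro ⟨k, hk⟩
    exact hi ⟨k, by simp only; omega⟩

variable [DiscreteTopology R]

lemma hasProd_oddDistinct : HasProd (fun k : ℕ ↦ (1 + X ^ (2 * k + 1) : R⟦X⟧))
    (PowerSeries.mk fun n ↦ (#(oddDistinct n) : R)) := by
  rw [← hasProd_odd_iff (f := fun i ↦ 1 + X ^ (i + 1))]
  convert! Nat.Partition.hasProd_genFun (fun i c ↦ if Odd i ∧ c = 1 then (1 : R) else 0) using 1
  · funext i
    rw [tsum_eq_single 0]
    · by_cases h : Odd (i + 1) <;> simp [h]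
    · intro j hj
      simp [hj]
  · ext n
    simp only [coeff_mk, Nat.Partition.coeff_genFun, oddDistinct, card_filter, Finsupp.prod,
      prod_boole]
    push_cast
    refine sum_congr rfl fun p _ ↦ if_congr ?_ rfl rfl
    rw [Multiset.nodup_iff_count_le_one]
    simp only [Multiset.toFinsupp_support, Multiset.mem_toFinset, Multiset.toFinsupp_apply]
    constructor
    · rintro ⟨h1, h2⟩ i hi
      exact ⟨h1 i hi, le_antisymm (h2 i) (Multiset.one_le_count_iff_mem.2 hi)⟩
    · intro h
      refine ⟨fun i hi ↦ (h i hi).1, fun i ↦ ?_⟩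
      by_cases hi : i ∈ p.parts
      · exact (h i hi).2.le
      · simp [Multiset.count_eq_zero_of_notMem hi]

lemma restricted_mul {O : R⟦X⟧} (hO : HasProd (fun k : ℕ ↦ (1 - X ^ (2 * k + 1) : R⟦X⟧)) O) :
    (PowerSeries.mk fun n ↦ (#(Nat.Partition.restricted n Odd) : R)) * O = 1 := by
  rw [← hasProd_odd_iff (f := fun i ↦ 1 - X ^ (i + 1))] at hO
  refine ((Nat.Partition.hasProd_powerSeriesMk_card_restricted R Odd).mul hO).unique ?_
  convert! hasProd_one using 1
  funext i
  split_ifs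
  · simp_rw [pow_mul]
    exact tsum_pow_mul_one_sub_of_constantCoeff_eq_zero (by simp)
  · simp

variable {R}

lemma pbarOddSeries_mul {D O : R⟦X⟧}
    (hD : HasProd (fun k : ℕ ↦ (1 + X ^ (2 * k + 1) : R⟦X⟧)) D)
    (hO : HasProd (fun k : ℕ ↦ (1 - X ^ (2 * k + 1) : R⟦X⟧)) O) :
    pbarOddSeries R * O = D := by
  rw [pbarOddSeries_eq_mul, mul_assoc, restricted_mul R hO, mul_one]
  exact (hasProd_oddDistinct R).unique hD

/-- `∑ pbarOdd n qⁿ = φ(-q²) / φ(-q)`. -/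
lemma pbarOddSeries_mul_theta [IsDomain R] :
    pbarOddSeries R * theta 1 paritySign = theta 2 paritySign := by
  have hD := (multipliable_add (R := R) (f := fun k ↦ 2 * k + 1) (by intro; omega)).hasProd
  have hO := (multipliable_sub (R := R) (f := fun k ↦ 2 * k + 1) (by intro; omega)).hasProd
  have hA := (multipliable_add (R := R) (f := fun k ↦ 2 * (k + 1)) (by intro; omega)).hasProd
  have hB := (multipliable_sub (R := R) (f := fun k ↦ 2 * (k + 1)) (by intro; omega)).hasProd
  set D := ∏' k : ℕ, (1 + X ^ (2 * k + 1) : R⟦X⟧)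
  set O := ∏' k : ℕ, (1 - X ^ (2 * k + 1) : R⟦X⟧)
  set A := ∏' k : ℕ, (1 + X ^ (2 * (k + 1)) : R⟦X⟧)
  set B := ∏' k : ℕ, (1 - X ^ (2 * (k + 1)) : R⟦X⟧)
  have hDA : HasProd (fun i : ℕ ↦ (1 + X ^ (1 * (i + 1)) : R⟦X⟧)) (D * A) := by
    refine HasProd.even_mul_odd ?_ ?_
    · simpa using hD
    · simpa [mul_add] using hA
  have hOB : HasProd (fun i : ℕ ↦ (1 - X ^ (1 * (i + 1)) : R⟦X⟧)) (O * B) := by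
    refine HasProd.even_mul_odd ?_ ?_
    · simpa using hO
    · simpa [mul_add] using hB
  have h1 := gauss one_pos hDA hOB
  have h2 := gauss two_pos hA hB
  have h3 := pbarOddSeries_mul hD hO
  have hA0 : A ≠ 0 := by
    intro h
    have := constantCoeff_hasProd hA (by simp)
    simp [h] at this
  have hO0 : O ≠ 0 := by
    intro h
    have := constantCoeff_hasProd hO (by simp)
    simp [h] at this
  refine mul_right_cancel₀ (mul_ne_zero hO0 hA0) ?_
  linear_combination (A * theta 1 paritySign) * h3 + h1 - O * h2

end GeneratingFunction

open WithPiTopology in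
/-- Modulo 2 the numerator and the denominator of `∏ (1 + qⁱ) / (1 - qⁱ)` agree. -/
lemma two_dvd_pbarOdd {n : ℕ} (hn : n ≠ 0) : 2 ∣ pbarOdd n := by
  let _ : TopologicalSpace (ZMod 2) := ⊥
  have : DiscreteTopology (ZMod 2) := ⟨rfl⟩
  have hO := (multipliable_sub (R := ZMod 2) (f := fun k ↦ 2 * k + 1) (by intro; omega)).hasProd
  set O := ∏' k : ℕ, (1 - X ^ (2 * k + 1) : (ZMod 2)⟦X⟧)
  have hneg : (-1 : (ZMod 2)⟦X⟧) = 1 := by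
    rw [← map_one (C (R := ZMod 2)), ← map_neg]
    rfl
  have hD : HasProd (fun k : ℕ ↦ (1 + X ^ (2 * k + 1) : (ZMod 2)⟦X⟧)) O := by
    convert! hO using 2 with k
    linear_combination -(X ^ (2 * k + 1) : (ZMod 2)⟦X⟧) * hneg
  have hO0 : O ≠ 0 := by
    intro h
    have := constantCoeff_hasProd hO (by simp)
    simp [h] at this
  have h1 : pbarOddSeries (ZMod 2) = 1 :=
    mul_right_cancel₀ hO0 (by rw [pbarOddSeries_mul hD hO, one_mul])
  have h2 := congrArg (coeff n) h1
  rw [pbarOddSeries, coeff_mk, coeff_one, if_neg hn] at h2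
  exact (ZMod.natCast_eq_zero_iff _ _).1 h2

/-! ### Reduction modulo 3 -/

lemma theta_pow_three (m : ℕ) (s : ℤ → ZMod 3) :
    theta m s ^ 3 = expand 3 three_ne_zero (theta m s) := by
  have h := MvPowerSeries.map_frobenius_expand (R := ZMod 3) 3 three_ne_zero (f := theta m s)
  rw [ZMod.frobenius_zmod] at h
  rw [← show _ = theta m s ^ 3 from h]
  exact congrFun (congrArg DFunLike.coe MvPowerSeries.map_id) _

lemma expand_theta {R : Type*} [CommRing R] (m : ℕ) (s : ℤ → R) :
    expand 3 three_ne_zero (theta m s) = theta (3 * m) s := by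
  ext n
  by_cases h : 3 ∣ n
  · obtain ⟨k, rfl⟩ := h
    rw [coeff_expand_mul, theta, theta, weightedSeries, weightedSeries, coeff_mk, coeff_mk]
    simp [mul_assoc]
  · rw [coeff_expand_of_not_dvd _ _ _ h, theta, weightedSeries, coeff_mk]
    refine (finsum_mem_of_eqOn_zero ?_).symm
    intro x hx
    exact absurd ⟨_, ((mul_assoc _ _ _).symm.trans hx).symm⟩ h

lemma coeff_three_mul_mul_expand {R : Type*} [CommRing R] (f g : R⟦X⟧) (n : ℕ) :
    coeff (3 * n) (f * expand 3 three_ne_zero g) =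
      coeff n ((PowerSeries.mk fun k ↦ coeff (3 * k) f) * g) := by
  rw [coeff_mul, coeff_mul]
  symm
  refine sum_of_injOn (fun p ↦ (3 * p.1, 3 * p.2)) ?_ ?_ ?_ ?_
  · rintro ⟨a, b⟩ - ⟨c, d⟩ - h
    simpa using h
  · rintro ⟨a, b⟩ h
    simp only [mem_coe, HasAntidiagonal.mem_antidiagonal] at h ⊢
    omega
  · rintro ⟨a, b⟩ h h'
    rw [HasAntidiagonal.mem_antidiagonal] at h
    rw [coeff_expand_of_not_dvd, mul_zero]
    rintro ⟨d, rfl⟩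
    refine h' ⟨(n - d, d), ?_, ?_⟩
    · simp only [mem_coe, HasAntidiagonal.mem_antidiagonal]
      simp only at h
      omega
    · simp only [Prod.mk.injEq, and_true]
      simp only at h
      omega
  · rintro ⟨a, b⟩ -
    simp [coeff_expand_mul]

/-- Modulo 3, `∑ pbarOdd (3 n) qⁿ = φ(-q) φ(-q⁶)`. -/
lemma pbarOdd_three_mul (n : ℕ) : (pbarOdd (3 * n) : ZMod 3) =
    coeff n (theta 1 paritySign * theta 6 paritySign : (ZMod 3)⟦X⟧) := by
  let _ : TopologicalSpace (ZMod 3) := ⊥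
  have : DiscreteTopology (ZMod 3) := ⟨rfl⟩
  set a : (ZMod 3)⟦X⟧ := theta 1 paritySign with ha
  set b : (ZMod 3)⟦X⟧ := theta 2 paritySign with hb
  set U : (ZMod 3)⟦X⟧ := PowerSeries.mk fun k ↦ coeff (3 * k) (pbarOddSeries (ZMod 3))
  have hP : pbarOddSeries (ZMod 3) * a = b := pbarOddSeries_mul_theta
  have hc : theta 1 1 * a = b * b := theta_mul_theta
  have ha3 : a ^ 3 = expand 3 three_ne_zero a := theta_pow_three 1 _
  have hd : a ^ 3 = theta 3 paritySign := ha3.trans (expand_theta 1 _)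
  have he : b ^ 3 = theta 6 paritySign := (theta_pow_three 2 _).trans (expand_theta 2 _)
  have hU : U * a = theta 1 1 * (b * a ^ 3) := by
    ext k
    rw [hd, ← coeff_three_mul_theta, ← coeff_three_mul_mul_expand, ← ha3]
    congr 1
    linear_combination a ^ 2 * hP
  have ha0 : a ≠ 0 := by
    intro h
    have h0 := coeff_partial_theta (R := ZMod 3) one_pos (le_refl 0)
    rw [← ha, h] at h0
    simp at h0
  have hfin : U = a * b ^ 3 := by
    refine mul_right_cancel₀ ha0 ?_
    linear_combination hU + b * a ^ 2 * hc
  rw [← he, ← hfin]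
  simp [U, pbarOddSeries]

/-- An odd power of 3 times a number congruent to 1 modulo 3 is not of the form `x² + 6y²`. -/
lemma no_rep (a n : ℕ) (x y : ℤ) : x ^ 2 + 6 * y ^ 2 ≠ 3 ^ (2 * a + 1) * (3 * n + 1) := by
  induction a generalizing x y with
  | zero =>
    intro h
    rw [mul_zero, zero_add, pow_one] at h
    obtain ⟨z, rfl⟩ : 3 ∣ x := Int.prime_three.dvd_of_dvd_pow (n := 2)
      ⟨3 * n + 1 - 2 * y ^ 2, by linarith⟩
    have h2 : 3 * z ^ 2 + 2 * y ^ 2 = 3 * n + 1 := by linarith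
    have hy : (y % 3) ^ 2 ≡ y ^ 2 [ZMOD 3] := (Int.mod_modEq _ _).pow 2
    have : y % 3 = 0 ∨ y % 3 = 1 ∨ y % 3 = 2 := by omega
    rw [Int.ModEq] at hy
    rcases this with h | h | h <;> rw [h] at hy <;> norm_num at hy <;> omega
  | succ a ih =>
    intro h
    set N : ℤ := 3 ^ (2 * a + 1) * (3 * n + 1) with hN
    have h9 : x ^ 2 + 6 * y ^ 2 = 9 * N := by rw [h, hN]; ring
    obtain ⟨z, rfl⟩ : 3 ∣ x := Int.prime_three.dvd_of_dvd_pow (n := 2)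
      ⟨3 * N - 2 * y ^ 2, by linarith⟩
    obtain ⟨w, rfl⟩ : 3 ∣ y := Int.prime_three.dvd_of_dvd_pow (n := 2)
      ⟨y ^ 2 - N + z ^ 2, by linarith⟩
    exact ih z w (by linarith)

theorem pbarOdd_congruence_family (α n : ℕ) (hα : 1 ≤ α) :
    pbarOdd (3 ^ (2 * α) * (3 * n + 1)) ≡ 0 [MOD 6] := by
  have h2 : 2 ∣ pbarOdd (3 ^ (2 * α) * (3 * n + 1)) := two_dvd_pbarOdd (by positivity)
  have h3 : 3 ∣ pbarOdd (3 ^ (2 * α) * (3 * n + 1)) := by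
    obtain ⟨a, rfl⟩ : ∃ a, α = a + 1 := ⟨α - 1, by omega⟩
    rw [← ZMod.natCast_eq_zero_iff, show 3 ^ (2 * (a + 1)) * (3 * n + 1) =
      3 * (3 ^ (2 * a + 1) * (3 * n + 1)) by ring, pbarOdd_three_mul, theta, theta,
      (finiteFibers_sq one_pos).mul (finiteFibers_sq (by norm_num)), weightedSeries, coeff_mk]
    refine finsum_mem_of_eqOn_zero ?_
    rintro ⟨x, y⟩ h
    refine absurd ?_ (no_rep a n x y)
    rw [Set.mem_ofPred_eq] at h
    zify at h
    simpa only [sq_abs, one_mul] using h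
  exact (Nat.modEq_zero_iff_dvd).2 (Nat.Coprime.mul_dvd_of_dvd_of_dvd (by norm_num) h2 h3)
end

section
/- For all integers α ≥ 1 and n ≥ 0, the number 17·3^{2α} − 1 is divisible by 8 and pend(3^{2α+1}·n + (17·3^{2α} − 1)/8) ≡ 0 (mod 3). -/
/-!
Work with power series over `ZMod 3` and Ramanujan's theta functions `ψ(q) = ∑_{n ≥ 0} q^(n(n+1)/2)`
and `φ(q) = ∑_{n ∈ ℤ} q^(n²)`.

An even part `m` contributes `1 + x² + x³ + ⋯ = (1 + x³) / (1 - x²)`, `x = q^m`, to the generating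
function of `pend`, so that `∑ pend(n) qⁿ = ∏ (1 + q^(6k)) / ψ(-q)`. Since `f(q)³ = f(q³)` modulo
`3`, the quotient `1 / ψ(-q)` is `ψ(-q)² / ψ(-q³)`, and the dissection
`ψ(q) = f(q³, q⁶) + q ψ(q⁹)` (`psi_dissection`) gives
`∑ pend(3n + 1) qⁿ = ψ(-q³) φ(q³) / φ(-q²)` (`sect_one_pendSeries_mul`). The same device, applied to
`φ(-q²)` and its dissection `φ(-q) = φ(-q⁹) + q W(q³)` (`Phi_dissection`), leads to
`∑ pend(9n + 1) qⁿ = K(q)` with `K(q) = ψ(q) φ(-q⁶)²` (`sect_sect_pendSeries`).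

The dissection of `ψ` has no exponents that are `2` modulo `3`, hence neither has `K`: its
coefficient at `3n + 2` vanishes. Taking from `K` the exponents `3n + 1` and then from the result
the exponents `3n` gives back `K`, so its coefficients at `9N + 1` and `N` agree. Iterating this
`α - 1` times from `3n + 2` yields the congruence (`coeff_K_eq_zero`).

The series expansions of the theta products come from the Jacobi triple product for formal power
series (`jacobi_triple_product`), the limit of a finite identity with Gaussian binomial
coefficients (`finite_jacobi`).
-/

open PowerSeries

/-- `pend n` is the number of partitions of `n` in which no even part appears exactly once. -/
noncomputable def pend (n : ℕ) : ℕ :=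
  Nat.card {p : n.Partition // ∀ k ∈ p.parts, Even k → 2 ≤ p.parts.count k}

namespace PendCong

open Filter Topology
open scoped PowerSeries.WithPiTopology

/-! ### A finite form of the Jacobi triple product -/

section Finite
variable {A : Type*} [CommRing A]

/-- The `j`-th term `a ^ (j (j + 1) / 2) * b ^ (j (j - 1) / 2)` of Ramanujan's theta function `f(a, b)`,
with the two natural exponents written as binomial coefficients. -/
def thetaTerm (a b : A) : ℤ → A
  | Int.ofNat n => a ^ ((n + 1).choose 2) * b ^ (n.choose 2)
  | Int.negSucc n => a ^ ((n + 1).choose 2) * b ^ ((n + 2).choose 2)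

lemma thetaTerm_natCast (a b : A) (n : ℕ) :
    thetaTerm a b n = a ^ ((n + 1).choose 2) * b ^ (n.choose 2) := rfl

lemma thetaTerm_neg_natCast (a b : A) (n : ℕ) :
    thetaTerm a b (-n) = a ^ (n.choose 2) * b ^ ((n + 1).choose 2) := by
  cases n with
  | zero => simp [thetaTerm]
  | succ n => rfl

lemma succ_choose_two (n : ℕ) : (n + 1).choose 2 = n + n.choose 2 := by
  simp [Nat.choose_succ_succ' n 1]

lemma thetaTerm_succ (a b : A) (n : ℕ) :
    thetaTerm a b (n + 1) = thetaTerm a b n * (a * (a * b) ^ n) := by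
  rw [show (n : ℤ) + 1 = ((n + 1 : ℕ) : ℤ) by push_cast; ring, thetaTerm_natCast,
    thetaTerm_natCast, succ_choose_two (n + 1), succ_choose_two n]
  ring

lemma thetaTerm_neg_succ (a b : A) (n : ℕ) :
    thetaTerm a b (-n - 1) = thetaTerm a b (-n) * (b * (a * b) ^ n) := by
  rw [show -(n : ℤ) - 1 = -((n + 1 : ℕ) : ℤ) by push_cast; ring, thetaTerm_neg_natCast,
    thetaTerm_neg_natCast, succ_choose_two (n + 1), succ_choose_two n]
  ring

/-- The shift rule that drives the induction on `t` in `finite_jacobi`: multiplying the term at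
`u - t` by the new factor `b (ab) ^ t` moves it one step to the left. -/
lemma thetaTerm_shift (a b : A) (t u : ℕ) :
    thetaTerm a b (u - t) * (b * (a * b) ^ t) = (a * b) ^ u * thetaTerm a b (u - t - 1) := by
  rcases le_or_gt u t with h | h
  · obtain ⟨m, rfl⟩ := Nat.exists_eq_add_of_le h
    rw [show (u : ℤ) - (u + m : ℕ) = -m by push_cast; ring, thetaTerm_neg_succ]
    ring
  · obtain ⟨m, rfl⟩ := Nat.exists_eq_add_of_lt h
    rw [show ((t + m + 1 : ℕ) : ℤ) - t - 1 = m by push_cast; ring,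
      show ((t + m + 1 : ℕ) : ℤ) - t = m + 1 by push_cast; ring, thetaTerm_succ]
    ring

/-- The Gaussian binomial coefficient `[m choose u]` at `c`, defined through its Pascal recurrence so
that it makes sense in every commutative ring. -/
def gaussBinom (c : A) : ℕ → ℕ → A
  | _, 0 => 1
  | 0, _ + 1 => 0
  | m + 1, u + 1 => gaussBinom c m u + c ^ (u + 1) * gaussBinom c m (u + 1)

@[simp] lemma gaussBinom_zero (c : A) (m : ℕ) : gaussBinom c m 0 = 1 := by
  cases m <;> simp [gaussBinom]

lemma gaussBinom_succ (c : A) (m u : ℕ) : gaussBinom c (m + 1) (u + 1) =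
    gaussBinom c m u + c ^ (u + 1) * gaussBinom c m (u + 1) := by
  simp [gaussBinom]

lemma gaussBinom_eq_zero (c : A) {m u : ℕ} (h : m < u) : gaussBinom c m u = 0 := by
  induction m generalizing u with
  | zero => cases u <;> simp_all [gaussBinom]
  | succ m ih =>
    obtain ⟨u, rfl⟩ := Nat.exists_eq_succ_of_ne_zero (by omega : u ≠ 0)
    rw [Nat.succ_eq_add_one, gaussBinom_succ, ih (by omega), ih (by omega)]
    simp

@[simp] lemma gaussBinom_self (c : A) (m : ℕ) : gaussBinom c m m = 1 := by
  induction m with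
  | zero => simp
  | succ m ih => rw [gaussBinom_succ, ih, gaussBinom_eq_zero c (Nat.lt_succ_self m)]; simp

/-- The `q`-Pochhammer symbol `(c; c)_n = (1 - c)(1 - c²)⋯(1 - cⁿ)`. -/
def poch (c : A) (n : ℕ) : A := ∏ i ∈ Finset.range n, (1 - c ^ (i + 1))

@[simp] lemma poch_zero (c : A) : poch c 0 = 1 := by simp [poch]

lemma poch_succ (c : A) (n : ℕ) : poch c (n + 1) = poch c n * (1 - c ^ (n + 1)) := by
  simp [poch, Finset.prod_range_succ]

lemma gaussBinom_mul_poch (c : A) (u v : ℕ) :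
    gaussBinom c (u + v) u * (poch c u * poch c v) = poch c (u + v) := by
  induction u generalizing v with
  | zero => simp
  | succ u ihu =>
    induction v with
    | zero => simp
    | succ v ihv =>
      have h1 := ihu (v + 1)
      have e1 : u + 1 + (v + 1) = (u + 1 + v) + 1 := by ring
      have e2 : u + (v + 1) = u + 1 + v := by ring
      rw [e2] at h1
      rw [e1, gaussBinom_succ, poch_succ c (u + 1 + v)]
      calc _ = (gaussBinom c (u + 1 + v) u * (poch c u * poch c (v + 1))) * (1 - c ^ (u + 1))
            + c ^ (u + 1) * (1 - c ^ (v + 1)) *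
              (gaussBinom c (u + 1 + v) (u + 1) * (poch c (u + 1) * poch c v)) := by
            rw [poch_succ c u, poch_succ c v]; ring
        _ = _ := by rw [h1, ihv]; ring

/-- The `q`-binomial theorem; it is the case `t = 0` of `finite_jacobi`. -/
lemma prod_one_add_eq_sum (c a : A) (s : ℕ) : ∏ k ∈ Finset.range s, (1 + a * c ^ k) =
    ∑ u ∈ Finset.range (s + 1), gaussBinom c s u * (c ^ (u.choose 2) * a ^ u) := by
  induction s generalizing a with
  | zero => simp
  | succ s ih =>
    rw [Finset.prod_range_succ']
    have h : ∀ k, 1 + a * c ^ (k + 1) = 1 + (a * c) * c ^ k := fun k => by ring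
    simp only [h]
    rw [ih, Finset.sum_range_succ' _ (s + 1)]
    simp only [gaussBinom_succ]
    have h2 : ∑ u ∈ Finset.range (s + 1), c ^ (u + 1) * gaussBinom c s (u + 1) *
          (c ^ ((u + 1).choose 2) * a ^ (u + 1)) + 1 =
        ∑ u ∈ Finset.range (s + 1), gaussBinom c s u * (c ^ (u.choose 2) * (a * c) ^ u) := by
      rw [Finset.sum_range_succ, Finset.sum_range_succ' (n := s),
        gaussBinom_eq_zero c (Nat.lt_succ_self s)]
      simp only [mul_pow]
      simp
      refine Finset.sum_congr rfl fun u _ => by ring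
    simp only [add_mul, Finset.sum_add_distrib]
    have h3 : ∑ u ∈ Finset.range (s + 1), gaussBinom c s u *
          (c ^ ((u + 1).choose 2) * a ^ (u + 1)) =
        a * ∑ u ∈ Finset.range (s + 1), gaussBinom c s u * (c ^ (u.choose 2) * (a * c) ^ u) := by
      rw [Finset.mul_sum]
      refine Finset.sum_congr rfl fun u _ => ?_
      rw [succ_choose_two]; ring
    simp only [gaussBinom_zero, Nat.choose_zero_succ, pow_zero, mul_one]
    rw [add_assoc, h2, h3]
    ring

/-- A finite form of the Jacobi triple product, valid in every commutative ring. Its limit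
`s, t → ∞` is `jacobi_triple_product`. -/
lemma finite_jacobi (a b : A) (s t : ℕ) :
    (∏ k ∈ Finset.range s, (1 + a * (a * b) ^ k)) *
      (∏ k ∈ Finset.range t, (1 + b * (a * b) ^ k)) =
    ∑ u ∈ Finset.range (s + t + 1), gaussBinom (a * b) (s + t) u * thetaTerm a b (u - t) := by
  induction t with
  | zero =>
    simp only [Finset.range_zero, Finset.prod_empty, mul_one, prod_one_add_eq_sum]
    refine Finset.sum_congr rfl fun u _ => ?_
    simp only [Nat.cast_zero, sub_zero, add_zero, thetaTerm_natCast, succ_choose_two]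
    ring
  | succ t ih =>
    rw [Finset.prod_range_succ, ← mul_assoc, ih, ← add_assoc, Finset.sum_range_succ' _ (s + t + 1)]
    simp only [gaussBinom_succ, add_mul, Finset.sum_add_distrib]
    have e : ∀ u : ℕ, ((u + 1 : ℕ) : ℤ) - ((t + 1 : ℕ) : ℤ) = u - t := fun u => by push_cast; ring
    simp only [e]
    rw [mul_add, mul_one]
    refine Eq.trans ?_ (add_assoc _ _ _).symm
    congr 1
    rw [Finset.sum_mul, Finset.sum_range_succ' _ (s + t), Finset.sum_range_succ _ (s + t),
      gaussBinom_eq_zero (a * b) (Nat.lt_succ_self (s + t))]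
    simp only [mul_zero, zero_mul, add_zero, mul_assoc, thetaTerm_shift]
    congr 1
    · refine Finset.sum_congr rfl fun u _ => ?_
      rw [show ((u + 1 : ℕ) : ℤ) - t - 1 = u - t by push_cast; ring]
      ring
    · simp
      congr 1
      ring
end Finite

/-! ### The Jacobi triple product for formal power series -/

section Limit
variable {R : Type*} [CommRing R]

lemma X_pow_dvd_pow {c : R⟦X⟧} (hc : constantCoeff c = 0) (N : ℕ) : X ^ N ∣ c ^ N :=
  pow_dvd_pow_of_dvd (X_dvd_iff.mpr hc) N

lemma X_pow_dvd_pow_of_le {c : R⟦X⟧} (hc : constantCoeff c = 0) {N m : ℕ} (h : N ≤ m) :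
    X ^ N ∣ c ^ m :=
  (X_pow_dvd_pow hc N).trans (pow_dvd_pow c h)

lemma X_pow_dvd_poch_sub {c : R⟦X⟧} (hc : constantCoeff c = 0) {N m : ℕ} (h : N ≤ m) :
    X ^ N ∣ poch c m - poch c N := by
  induction m, h using Nat.le_induction with
  | base => simp
  | succ m h ih =>
    rw [poch_succ, show poch c m * (1 - c ^ (m + 1)) - poch c N =
      (poch c m - poch c N) - poch c m * c ^ (m + 1) by ring]
    exact dvd_sub ih ((X_pow_dvd_pow_of_le hc (by omega)).mul_left _)

lemma isUnit_poch {c : R⟦X⟧} (hc : constantCoeff c = 0) (n : ℕ) : IsUnit (poch c n) := by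
  rw [PowerSeries.isUnit_iff_constantCoeff]
  simp [poch, map_prod, hc]

/-- Modulo `X ^ N` all `(c; c)_n` with `n ≥ N` agree, so `[u+v choose u]`, multiplied by any of them,
is `(c; c)_(u+v) (c; c)_n / ((c; c)_u (c; c)_v) ≡ 1`. -/
lemma X_pow_dvd_gaussBinom_mul_poch_sub_one {c : R⟦X⟧} (hc : constantCoeff c = 0)
    {N u v n : ℕ} (hu : N ≤ u) (hv : N ≤ v) (hn : N ≤ n) :
    X ^ N ∣ gaussBinom c (u + v) u * poch c n - 1 := by
  let f := Ideal.Quotient.mk (Ideal.span {(X : R⟦X⟧) ^ N})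
  have hf : ∀ x y : R⟦X⟧, f x = f y ↔ X ^ N ∣ x - y := fun x y => by
    rw [Ideal.Quotient.eq, Ideal.mem_span_singleton]
  have hp : ∀ m, N ≤ m → f (poch c m) = f (poch c N) := fun m hm =>
    (hf _ _).mpr (X_pow_dvd_poch_sub hc hm)
  have hunit : IsUnit (f (poch c N)) := (isUnit_poch hc N).map f
  have h := congrArg f (gaussBinom_mul_poch c u v)
  rw [map_mul, map_mul, hp u hu, hp v hv, hp (u + v) (by omega), ← mul_assoc] at h
  rw [← hf, map_mul, hp n hn, map_one]
  exact hunit.mul_right_cancel (by rw [h, one_mul])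

lemma le_choose_two (n : ℕ) : n ≤ (n + 1).choose 2 := by
  rw [succ_choose_two]; omega

lemma pow_dvd_thetaTerm {A : Type*} [CommRing A] (a b : A) {N : ℕ} {j : ℤ}
    (h : N + 1 ≤ j.natAbs) : (a * b) ^ N ∣ thetaTerm a b j := by
  obtain ⟨n, rfl | rfl⟩ := j.eq_nat_or_neg
  · obtain ⟨m, rfl⟩ := Nat.exists_eq_add_of_le' (show 1 ≤ n by omega)
    rw [thetaTerm_natCast, succ_choose_two (m + 1), pow_add, mul_assoc, ← mul_pow]
    have := le_choose_two m
    exact (pow_dvd_pow _ (by omega)).mul_left _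
  · obtain ⟨m, rfl⟩ := Nat.exists_eq_add_of_le' (show 1 ≤ n by omega)
    rw [thetaTerm_neg_natCast, succ_choose_two (m + 1), pow_add, mul_left_comm, ← mul_pow]
    have := le_choose_two m
    exact (pow_dvd_pow _ (by omega)).mul_left _

lemma X_pow_dvd_thetaTerm {a b : R⟦X⟧} (hc : constantCoeff (a * b) = 0) {N : ℕ} {j : ℤ}
    (h : N + 1 ≤ j.natAbs) : X ^ N ∣ thetaTerm a b j :=
  (X_pow_dvd_pow hc N).trans (pow_dvd_thetaTerm a b h)

variable [TopologicalSpace R]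

lemma summable_thetaTerm {a b : R⟦X⟧} (hc : constantCoeff (a * b) = 0) :
    Summable (thetaTerm a b) := by
  rw [WithPiTopology.summable_iff_summable_coeff]
  intro d
  refine summable_of_hasFiniteSupport ((Set.finite_Icc (-(d + 1) : ℤ) (d + 1)).subset ?_)
  intro j hj
  by_contra hj'
  refine hj (X_pow_dvd_iff.mp (X_pow_dvd_thetaTerm hc (N := d + 1) ?_) d (by omega))
  simp only [Set.mem_Icc] at hj'
  omega

lemma multipliable_one_add {f : ℕ → R⟦X⟧} (h : ∀ k, X ^ k ∣ f k) :
    Multipliable fun k => 1 + f k := by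
  apply WithPiTopology.multipliable_one_add_of_tendsto_order_atTop_nhds_top
  refine ENat.tendsto_nhds_top_iff_natCast_lt.mpr fun n =>
    Filter.eventually_atTop.mpr ⟨n + 1, fun m hm => ?_⟩
  refine lt_of_lt_of_le (b := (m : ℕ∞)) (by exact_mod_cast hm) ?_
  exact PowerSeries.nat_le_order _ _ (fun i hi => X_pow_dvd_iff.mp (h m) i hi)

lemma multipliable_one_sub {f : ℕ → R⟦X⟧} (h : ∀ k, X ^ k ∣ f k) :
    Multipliable fun k => 1 - f k := by
  simpa only [sub_eq_add_neg] using multipliable_one_add (f := fun k => - f k)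
    fun k => (h k).neg_right

variable [IsTopologicalRing R] [T2Space R]

/-- The Jacobi triple product `f(a, b) = ∏ (1 + a (ab)^k) (1 + b (ab)^k) (1 - (ab)^(k+1))` for formal
power series `a`, `b` whose product has no constant term. -/
theorem jacobi_triple_product {a b : R⟦X⟧} (hc : constantCoeff (a * b) = 0) :
    HasSum (thetaTerm a b) ((∏' k, (1 + a * (a * b) ^ k)) * (∏' k, (1 + b * (a * b) ^ k)) *
      ∏' k, (1 - (a * b) ^ (k + 1))) := by
  have hs := (summable_thetaTerm hc).hasSum
  convert hs using 1
  have hd : ∀ k, X ^ k ∣ (a * b) ^ k := X_pow_dvd_pow hc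
  have t1 := (multipliable_one_add (f := fun k => a * (a * b) ^ k)
    fun k => (hd k).mul_left a).hasProd.tendsto_prod_nat
  have t2 := (multipliable_one_add (f := fun k => b * (a * b) ^ k)
    fun k => (hd k).mul_left b).hasProd.tendsto_prod_nat
  have t3 := (multipliable_one_sub (f := fun k => (a * b) ^ (k + 1))
    fun k => X_pow_dvd_pow_of_le hc (by omega)).hasProd.tendsto_prod_nat
  have t := (t1.mul t2).mul t3
  have hmono : Tendsto (fun n : ℕ => Finset.Icc (-n : ℤ) n) atTop atTop := by
    refine tendsto_atTop_finset_of_monotone (fun m n h => ?_) fun j => ⟨j.natAbs, ?_⟩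
    · exact Finset.Icc_subset_Icc (by omega) (by omega)
    · simp only [Finset.mem_Icc]; omega
  have ts := hs.comp hmono
  have hre : ∀ n : ℕ, ∑ j ∈ Finset.Icc (-n : ℤ) n, thetaTerm a b j =
      ∑ u ∈ Finset.range (n + n + 1), thetaTerm a b (u - n) := by
    intro n
    refine (Finset.sum_nbij' (fun u : ℕ => (u : ℤ) - n) (fun j => (j + n).toNat) ?_ ?_ ?_ ?_ ?_).symm
    all_goals simp
    all_goals omega
  ext d
  refine tendsto_nhds_unique
    (((WithPiTopology.continuous_coeff R d).tendsto _).comp t)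
    ((((WithPiTopology.continuous_coeff R d).tendsto _).comp ts).congr' ?_)
  refine Filter.eventually_atTop.mpr ⟨2 * d + 4, fun n hn => ?_⟩
  simp only [Function.comp_apply]
  rw [hre, finite_jacobi, Finset.sum_mul, eq_comm, ← sub_eq_zero, ← map_sub,
    ← Finset.sum_sub_distrib]
  refine (X_pow_dvd_iff (n := d + 1)).mp (Finset.dvd_sum fun u hu => ?_) d (by omega)
  rw [Finset.mem_range] at hu
  rw [show gaussBinom (a * b) (n + n) u * thetaTerm a b (u - n) *
      ∏ i ∈ Finset.range n, (1 - (a * b) ^ (i + 1)) - thetaTerm a b (u - n) =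
    (gaussBinom (a * b) (n + n) u * poch (a * b) n - 1) * thetaTerm a b (u - n) by
      rw [poch]; ring]
  -- For `u` far from both ends of the range the Gaussian binomial is close to its limit;
  -- for the other `u` the theta term itself is divisible by a high power of `X`.
  by_cases h : d + 1 ≤ u ∧ d + 1 ≤ n + n - u
  · obtain ⟨v, hv⟩ := Nat.exists_eq_add_of_le (show u ≤ n + n by omega)
    rw [hv]
    exact (X_pow_dvd_gaussBinom_mul_poch_sub_one hc h.1 (by omega) (by omega)).mul_right _
  · exact (X_pow_dvd_thetaTerm hc (by omega)).mul_left _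

end Limit

/-! ### Euler products modulo 3 -/

/-- The substitution `q ↦ q²`. -/
noncomputable abbrev ex2 : (ZMod 3)⟦X⟧ →ₐ[ZMod 3] (ZMod 3)⟦X⟧ := expand 2 two_ne_zero
/-- The substitution `q ↦ q³`. -/
noncomputable abbrev ex3 : (ZMod 3)⟦X⟧ →ₐ[ZMod 3] (ZMod 3)⟦X⟧ := expand 3 three_ne_zero
/-- The substitution `q ↦ -q`. -/
noncomputable abbrev flip : (ZMod 3)⟦X⟧ →+* (ZMod 3)⟦X⟧ := rescale (-1)

/-- `∏ (1 + q^k)` over `k ≥ 1`. -/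
noncomputable def D : (ZMod 3)⟦X⟧ := ∏' k : ℕ, (1 + X ^ (k + 1))
/-- Euler's product `∏ (1 - q^k)` over `k ≥ 1`. -/
noncomputable def E : (ZMod 3)⟦X⟧ := ∏' k : ℕ, (1 - X ^ (k + 1))
/-- `∏ (1 - q^k)` over odd `k`. -/
noncomputable def O : (ZMod 3)⟦X⟧ := ∏' k : ℕ, (1 - X ^ (2 * k + 1))

lemma continuous_of_coeff {F : (ZMod 3)⟦X⟧ → (ZMod 3)⟦X⟧}
    (h : ∀ d, Continuous fun f => coeff d (F f)) : Continuous F := by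
  rw [continuous_iff_continuousAt]
  intro f
  rw [ContinuousAt, WithPiTopology.tendsto_iff_coeff_tendsto]
  exact fun d => (h d).tendsto f

lemma continuous_expand {p : ℕ} (hp : p ≠ 0) :
    Continuous (expand p hp : (ZMod 3)⟦X⟧ → (ZMod 3)⟦X⟧) := by
  refine continuous_of_coeff fun d => ?_
  simp only [coeff_expand]
  split_ifs
  · exact WithPiTopology.continuous_coeff _ _
  · exact continuous_const

lemma continuous_flip : Continuous flip := by
  refine continuous_of_coeff fun d => ?_
  simp only [coeff_rescale]
  exact (continuous_of_discreteTopology (f := fun x : ZMod 3 => (-1) ^ d * x)).comp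
    (WithPiTopology.continuous_coeff _ _)

lemma multipliable_add_X_pow {e : ℕ → ℕ} (h : ∀ k, k ≤ e k) :
    Multipliable fun k => (1 : (ZMod 3)⟦X⟧) + X ^ e k :=
  multipliable_one_add fun k => pow_dvd_pow _ (h k)

lemma multipliable_sub_X_pow {e : ℕ → ℕ} (h : ∀ k, k ≤ e k) :
    Multipliable fun k => (1 : (ZMod 3)⟦X⟧) - X ^ e k :=
  multipliable_one_sub fun k => pow_dvd_pow _ (h k)

lemma expand_tprod_add {p : ℕ} (hp : p ≠ 0) {e : ℕ → ℕ} (h : ∀ k, k ≤ e k) :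
    expand p hp (∏' k, ((1 : (ZMod 3)⟦X⟧) + X ^ e k)) = ∏' k, (1 + X ^ (p * e k)) := by
  rw [(multipliable_add_X_pow h).map_tprod _ (continuous_expand hp)]
  simp [pow_mul]

lemma expand_tprod_sub {p : ℕ} (hp : p ≠ 0) {e : ℕ → ℕ} (h : ∀ k, k ≤ e k) :
    expand p hp (∏' k, ((1 : (ZMod 3)⟦X⟧) - X ^ e k)) = ∏' k, (1 - X ^ (p * e k)) := by
  rw [(multipliable_sub_X_pow h).map_tprod _ (continuous_expand hp)]
  simp [pow_mul]

lemma ex2_D : ex2 D = ∏' k : ℕ, (1 + X ^ (2 * (k + 1))) := expand_tprod_add _ (by intro k; omega)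
lemma ex3_D : ex3 D = ∏' k : ℕ, (1 + X ^ (3 * (k + 1))) := expand_tprod_add _ (by intro k; omega)
lemma ex2_E : ex2 E = ∏' k : ℕ, (1 - X ^ (2 * (k + 1))) := expand_tprod_sub _ (by intro k; omega)
lemma ex3_E : ex3 E = ∏' k : ℕ, (1 - X ^ (3 * (k + 1))) := expand_tprod_sub _ (by intro k; omega)

lemma ex2_ex3 (f : (ZMod 3)⟦X⟧) : ex2 (ex3 f) = ex3 (ex2 f) := by
  rw [← expand_mul, ← expand_mul]

lemma E_ne_zero : E ≠ 0 := WithPiTopology.tprod_one_sub_X_pow_ne_zero (ZMod 3)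

lemma expand_ne_zero {p : ℕ} (hp : p ≠ 0) {f : (ZMod 3)⟦X⟧} (hf : f ≠ 0) : expand p hp f ≠ 0 := by
  intro h
  apply hf
  ext n
  rw [← coeff_expand_mul p hp, h, map_zero, map_zero]

lemma D_mul_E : D * E = ex2 E := by
  rw [ex2_E, D, E, ← (multipliable_add_X_pow (by intro k; omega)).tprod_mul
    (multipliable_sub_X_pow (by intro k; omega))]
  refine tprod_congr fun k => by ring

lemma O_mul_ex2_E : O * ex2 E = E := by
  rw [ex2_E, O, E]
  exact tprod_even_mul_odd (f := fun k => (1 : (ZMod 3)⟦X⟧) - X ^ (k + 1))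
    (multipliable_sub_X_pow (by intro k; omega)) (multipliable_sub_X_pow (by intro k; omega))

lemma D_mul_O : D * O = 1 := by
  have h1 := D_mul_E
  have h2 := O_mul_ex2_E
  refine mul_right_cancel₀ E_ne_zero ?_
  calc D * O * E = O * (D * E) := by ring
    _ = 1 * E := by rw [h1, h2, one_mul]

lemma flip_D : flip D = O * ex2 D := by
  rw [D, (multipliable_add_X_pow (by intro k; omega)).map_tprod _ continuous_flip, ← D, ex2_D, O]
  have h (k : ℕ) : flip (1 + X ^ (k + 1)) = 1 + (-1) ^ (k + 1) * X ^ (k + 1) := by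
    rw [map_add, map_pow, rescale_X, map_one, map_neg, map_one]; ring
  simp only [h]
  rw [← tprod_even_mul_odd]
  · congr 1
    · refine tprod_congr fun k => ?_
      rw [(odd_two_mul_add_one k).neg_one_pow]; ring
    · refine tprod_congr fun k => ?_
      rw [show 2 * k + 1 + 1 = 2 * (k + 1) by ring, (even_two_mul (k + 1)).neg_one_pow]; ring
  all_goals exact multipliable_one_add fun k => (pow_dvd_pow _ (by omega)).mul_left _

lemma flip_ex2 (f : (ZMod 3)⟦X⟧) : flip (ex2 f) = ex2 f := by
  ext n
  rw [coeff_rescale, coeff_expand]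
  split_ifs with h
  · rw [(even_iff_two_dvd.mpr h).neg_one_pow, one_mul]
  · simp

lemma flip_ex3 (f : (ZMod 3)⟦X⟧) : flip (ex3 f) = ex3 (flip f) := by
  ext n
  rw [coeff_rescale, coeff_expand, coeff_expand]
  split_ifs with h
  · obtain ⟨m, rfl⟩ := h
    rw [coeff_rescale, pow_mul, Nat.mul_div_cancel_left _ (by norm_num)]
    norm_num
  · simp

lemma flip_flip (f : (ZMod 3)⟦X⟧) : flip (flip f) = f := by
  ext n
  simp [coeff_rescale, ← mul_assoc, ← mul_pow]

lemma three_eq_zero : (3 : (ZMod 3)⟦X⟧) = 0 := by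
  rw [← map_ofNat (C : ZMod 3 →+* (ZMod 3)⟦X⟧) 3, show (OfNat.ofNat 3 : ZMod 3) = 0 from rfl,
    map_zero]

/-- The Frobenius identity `f(q)³ = f(q³)` over `ZMod 3`. -/
lemma pow_three_eq (f : (ZMod 3)⟦X⟧) : f ^ 3 = ex3 f := by
  have h := MvPowerSeries.map_frobenius_expand (R := ZMod 3) (p := 3) three_ne_zero (f := f)
  rw [← h, ZMod.frobenius_zmod]
  exact congrFun (congrArg DFunLike.coe (MvPowerSeries.map_id)) _

/-! ### The theta functions `ψ(q)`, `φ(-q)` and `f(q, q²)` modulo 3 -/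

/-- Ramanujan's `ψ(q) = ∑ q^(n(n+1)/2)` over `n ≥ 0`, in product form; see `hasSum_psi`. -/
noncomputable def psi : (ZMod 3)⟦X⟧ := D * ex2 E
/-- Ramanujan's `φ(-q) = ∑ (-1)^n q^(n²)` over all integers `n`, in product form; see `hasSum_Phi`. -/
noncomputable def Phi : (ZMod 3)⟦X⟧ := O ^ 2 * ex2 E
/-- Ramanujan's `f(q, q²)`, in product form; see `hasSum_Aser`. At `q³` it is the part of `ψ(q)`
carried by the exponents divisible by `3`. -/
noncomputable def Aser : (ZMod 3)⟦X⟧ :=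
  (∏' k : ℕ, (1 + X ^ (3 * k + 1))) * (∏' k : ℕ, (1 + X ^ (3 * k + 2))) * ex3 E

/-- The bilateral series `f(1, q)` runs through every triangular exponent twice, whence the factor `2`. -/
lemma hasSum_psi : HasSum (thetaTerm (1 : (ZMod 3)⟦X⟧) X) (2 * psi) := by
  convert jacobi_triple_product (a := (1 : (ZMod 3)⟦X⟧)) (b := X) (by simp) using 1
  have h1 : ∏' k : ℕ, ((1 : (ZMod 3)⟦X⟧) + 1 * (1 * X) ^ k) = 2 * D := by
    rw [tprod_eq_zero_mul']
    · simp only [one_mul, pow_zero, one_add_one_eq_two, D]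
    · simpa only [one_mul] using multipliable_add_X_pow (by intro k; omega)
  have h2 : ∏' k : ℕ, ((1 : (ZMod 3)⟦X⟧) + X * (1 * X) ^ k) = D := by
    simp only [one_mul, D, pow_succ']
  have h3 : ∏' k : ℕ, ((1 : (ZMod 3)⟦X⟧) - (1 * X) ^ (k + 1)) = E := by
    simp only [one_mul, E]
  rw [h1, h2, h3, psi, ← D_mul_E]
  ring

lemma hasSum_Phi : HasSum (thetaTerm (-X : (ZMod 3)⟦X⟧) (-X)) Phi := by
  convert jacobi_triple_product (a := (-X : (ZMod 3)⟦X⟧)) (b := -X) (by simp) using 1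
  have h1 : ∏' k : ℕ, ((1 : (ZMod 3)⟦X⟧) + -X * (-X * -X) ^ k) = O := by
    rw [O]; refine tprod_congr fun k => by ring
  have h3 : ∏' k : ℕ, ((1 : (ZMod 3)⟦X⟧) - (-X * -X) ^ (k + 1)) = ex2 E := by
    rw [ex2_E]; refine tprod_congr fun k => by rw [pow_mul]; ring
  rw [h1, h3, Phi]
  ring

lemma hasSum_Aser : HasSum (thetaTerm (X : (ZMod 3)⟦X⟧) (X ^ 2)) Aser := by
  convert jacobi_triple_product (a := (X : (ZMod 3)⟦X⟧)) (b := X ^ 2) (by simp) using 1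
  rw [Aser, ex3_E]
  refine congrArg₂ _ (congrArg₂ _ ?_ ?_) ?_
  · exact tprod_congr fun k => by ring
  · exact tprod_congr fun k => by ring
  · exact tprod_congr fun k => by rw [pow_mul]; ring

lemma Aser_mul_ex3_D : Aser * ex3 D = D * ex3 E := by
  have h : D = (∏' k : ℕ, (1 + X ^ (3 * k + 1))) * (∏' k : ℕ, (1 + X ^ (3 * k + 2))) * ex3 D := by
    rw [ex3_D]
    have t := (multipliable_add_X_pow (e := fun k => k + 1)
      (by intro k; omega)).hasProd.tendsto_prod_nat
    have t1 := (multipliable_add_X_pow (e := fun k => 3 * k + 1)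
      (by intro k; omega)).hasProd.tendsto_prod_nat
    have t2 := (multipliable_add_X_pow (e := fun k => 3 * k + 2)
      (by intro k; omega)).hasProd.tendsto_prod_nat
    have t3 := (multipliable_add_X_pow (e := fun k => 3 * (k + 1))
      (by intro k; omega)).hasProd.tendsto_prod_nat
    have h3 : Tendsto (fun n : ℕ => 3 * n) atTop atTop :=
      tendsto_atTop_mono (fun n => show n ≤ 3 * n by omega) tendsto_id
    refine tendsto_nhds_unique (t.comp h3) (((t1.mul t2).mul t3).congr fun n => ?_)
    simp only [Function.comp_apply]
    induction n with
    | zero => simp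
    | succ n ih =>
      rw [show 3 * (n + 1) = 3 * n + 1 + 1 + 1 by ring]
      simp only [Finset.prod_range_succ, ← ih]
      ring
  rw [Aser]
  conv_rhs => rw [h]
  ring

/-! ### Dissections of the theta functions modulo 3 -/

lemma two_choose_two (n : ℕ) : 2 * (((n + 1).choose 2 : ℕ) : ℤ) = n * (n + 1) := by
  induction n with
  | zero => simp
  | succ n ih => rw [succ_choose_two (n + 1)]; push_cast; linarith

lemma two_choose_two' (n : ℕ) : 2 * ((n.choose 2 : ℕ) : ℤ) = n * (n - 1) := by
  have h := two_choose_two n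
  rw [succ_choose_two] at h
  push_cast at h
  linarith

/-- For powers of one element `x` a theta term is a power of `x`, and twice its exponent is a
polynomial in `j`; this turns comparisons of theta terms into integer arithmetic. -/
lemma exists_thetaTerm_eq {A : Type*} [CommRing A] (x : A) (p q : ℕ) (j : ℤ) :
    ∃ n : ℕ, thetaTerm (x ^ p) (x ^ q) j = x ^ n ∧
      2 * (n : ℤ) = p * (j * (j + 1)) + q * (j * (j - 1)) := by
  obtain ⟨m, rfl | rfl⟩ := j.eq_nat_or_neg
  · refine ⟨p * (m + 1).choose 2 + q * m.choose 2, ?_, ?_⟩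
    · rw [thetaTerm_natCast]; ring
    · push_cast
      linear_combination (p : ℤ) * two_choose_two m + q * two_choose_two' m
  · refine ⟨p * m.choose 2 + q * (m + 1).choose 2, ?_, ?_⟩
    · rw [thetaTerm_neg_natCast]; ring
    · push_cast
      linear_combination (p : ℤ) * two_choose_two' m + q * two_choose_two m

lemma thetaTerm_neg_neg {A : Type*} [CommRing A] (a b : A) (j : ℤ) :
    thetaTerm (-a) (-b) j = (-1) ^ j.natAbs * thetaTerm a b j := by
  have key : ∀ n : ℕ, (-1 : A) ^ (n + 1).choose 2 * (-1) ^ n.choose 2 = (-1) ^ n := fun n => by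
    rw [succ_choose_two, pow_add, mul_assoc, ← mul_pow]; simp
  obtain ⟨m, rfl | rfl⟩ := j.eq_nat_or_neg
  · rw [thetaTerm_natCast, thetaTerm_natCast, neg_pow a, neg_pow b, Int.natAbs_natCast, ← key m]
    ring
  · rw [thetaTerm_neg_natCast, thetaTerm_neg_natCast, neg_pow a, neg_pow b, Int.natAbs_neg,
      Int.natAbs_natCast, ← key m]
    ring

lemma map_thetaTerm {A B : Type*} [CommRing A] [CommRing B] (f : A →+* B) (a b : A) (j : ℤ) :
    f (thetaTerm a b j) = thetaTerm (f a) (f b) j := by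
  cases j <;> simp [thetaTerm]

lemma ex3_thetaTerm (a b : (ZMod 3)⟦X⟧) (j : ℤ) :
    ex3 (thetaTerm a b j) = thetaTerm (ex3 a) (ex3 b) j :=
  map_thetaTerm (ex3 : (ZMod 3)⟦X⟧ →+* (ZMod 3)⟦X⟧) a b j

lemma hasSum_mod_three {M : Type*} [AddCommMonoid M] [TopologicalSpace M] [ContinuousAdd M]
    {f : ℤ → M} {a b c : M} (ha : HasSum (fun m => f (3 * m)) a)
    (hb : HasSum (fun m => f (3 * m + 1)) b) (hc : HasSum (fun m => f (3 * m + 2)) c) :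
    HasSum f (a + b + c) := by
  have key : ∀ (r : ℤ), 0 ≤ r → r < 3 → ∀ s, HasSum (fun m => f (3 * m + r)) s →
      HasSum (fun j => if j % 3 = r then f j else 0) s := by
    intro r h0 h3 s hs
    have hinj : Function.Injective fun m : ℤ => 3 * m + r := fun m n h => by
      simp only at h; omega
    rw [← hinj.hasSum_iff]
    · convert hs using 2 with m
      simp only [Function.comp_apply]
      rw [if_pos (by omega)]
    · intro j hj
      rw [if_neg]
      intro h
      exact hj ⟨j / 3, by simp only; omega⟩
  convert ((key 0 (by omega) (by omega) a (by simpa using ha)).add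
    (key 1 (by omega) (by omega) b hb)).add (key 2 (by omega) (by omega) c hc) using 2 with j
  have : j % 3 = 0 ∨ j % 3 = 1 ∨ j % 3 = 2 := by omega
  rcases this with h | h | h <;> simp [h]

lemma hasSum_ex3 {f : ℤ → (ZMod 3)⟦X⟧} {s : (ZMod 3)⟦X⟧} (h : HasSum f s) :
    HasSum (fun j => ex3 (f j)) (ex3 s) :=
  h.map ex3 (continuous_expand _)

lemma hasSum_neg {M : Type*} [AddCommMonoid M] [TopologicalSpace M] {f : ℤ → M} {s : M}
    (h : HasSum f s) : HasSum (fun j => f (-j)) s :=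
  (Equiv.neg ℤ).hasSum_iff.mpr h

lemma hasSum_of_eq {M : Type*} [AddCommMonoid M] [TopologicalSpace M] {f g : ℤ → M} {s : M}
    (h : HasSum g s) (e : ∀ m, f m = g m) : HasSum f s := by
  rwa [funext e]

/-- The dissection `ψ(q) = f(q³, q⁶) + q ψ(q⁹)`: in `2 ψ(q) = f(1, q)` the indices `0` and `1` modulo
`3` both contribute `f(q³, q⁶)`, and the indices `2` contribute `2 q ψ(q⁹)`. -/
lemma psi_dissection : psi = ex3 Aser + X * ex3 (ex3 psi) := by
  have hA := hasSum_ex3 hasSum_Aser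
  have hP := hasSum_neg ((hasSum_ex3 (hasSum_ex3 hasSum_psi)).mul_left X)
  have t : ∀ j, thetaTerm (1 : (ZMod 3)⟦X⟧) X j = thetaTerm (X ^ 0) (X ^ 1) j := by simp
  have tA : ∀ j, ex3 (thetaTerm (X : (ZMod 3)⟦X⟧) (X ^ 2) j) = thetaTerm (X ^ 3) (X ^ 6) j := by
    intro j; rw [ex3_thetaTerm, map_pow, expand_X, ← pow_mul]
  have tP : ∀ j, ex3 (ex3 (thetaTerm (1 : (ZMod 3)⟦X⟧) X j)) = thetaTerm (X ^ 0) (X ^ 9) j := by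
    intro j
    rw [ex3_thetaTerm, ex3_thetaTerm, map_one, map_one, expand_X, map_pow, expand_X, ← pow_mul,
      pow_zero]
  have h : HasSum (thetaTerm (1 : (ZMod 3)⟦X⟧) X)
      (ex3 Aser + ex3 Aser + X * ex3 (ex3 (2 * psi))) := by
    refine hasSum_mod_three ?_ ?_ ?_
    · refine hasSum_of_eq hA fun m => ?_
      rw [tA, t]
      obtain ⟨n, hn, hn'⟩ := exists_thetaTerm_eq (X : (ZMod 3)⟦X⟧) 0 1 (3 * m)
      obtain ⟨k, hk, hk'⟩ := exists_thetaTerm_eq (X : (ZMod 3)⟦X⟧) 3 6 m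
      rw [hn, hk]
      congr 1
      push_cast at hn' hk'
      zify
      linarith
    · refine hasSum_of_eq (hasSum_neg hA) fun m => ?_
      rw [tA, t]
      obtain ⟨n, hn, hn'⟩ := exists_thetaTerm_eq (X : (ZMod 3)⟦X⟧) 0 1 (3 * m + 1)
      obtain ⟨k, hk, hk'⟩ := exists_thetaTerm_eq (X : (ZMod 3)⟦X⟧) 3 6 (-m)
      rw [hn, hk]
      congr 1
      push_cast at hn' hk'
      zify
      linarith
    · refine hasSum_of_eq hP fun m => ?_
      rw [tP, t]
      obtain ⟨n, hn, hn'⟩ := exists_thetaTerm_eq (X : (ZMod 3)⟦X⟧) 0 1 (3 * m + 2)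
      obtain ⟨k, hk, hk'⟩ := exists_thetaTerm_eq (X : (ZMod 3)⟦X⟧) 0 9 (-m)
      rw [hn, hk, ← pow_succ']
      congr 1
      push_cast at hn' hk'
      zify
      linarith
  have e := hasSum_psi.unique h
  simp only [map_mul, map_ofNat] at e
  linear_combination 2 * e + (ex3 Aser + X * ex3 (ex3 psi) - psi) * three_eq_zero

lemma neg_one_pow_eq_of_even {A : Type*} [Ring A] {m n : ℕ} (h : Even (m + n)) :
    (-1 : A) ^ m = (-1) ^ n := by
  rcases Nat.even_or_odd m with hm | hm
  · rw [hm.neg_one_pow, ((Nat.even_add.mp h).mp hm).neg_one_pow]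
  · have hn : Odd n := by
      rw [← Nat.not_even_iff_odd] at hm ⊢
      exact fun h' => hm ((Nat.even_add.mp h).mpr h')
    rw [hm.neg_one_pow, hn.neg_one_pow]

/-- The dissection `φ(-q) = φ(-q⁹) + q W(q³)`. Only the first summand matters later; the witness is
`W = -2 f(-q⁵, -q)`. -/
lemma Phi_dissection : ∃ W, Phi = ex3 (ex3 Phi) + X * ex3 W := by
  have hP := hasSum_ex3 (hasSum_ex3 hasSum_Phi)
  have hW := (summable_thetaTerm (a := (-(X ^ 5) : (ZMod 3)⟦X⟧)) (b := -(X ^ 1)) (by simp)).hasSum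
  set W := ∑' j, thetaTerm (-(X ^ 5) : (ZMod 3)⟦X⟧) (-(X ^ 1)) j
  have hW1 := ((hasSum_ex3 hW).mul_left (-X))
  have hW2 := (Equiv.subLeft (-1 : ℤ)).hasSum_iff.mpr hW1
  have t : ∀ j, thetaTerm (-X : (ZMod 3)⟦X⟧) (-X) j =
      (-1) ^ j.natAbs * thetaTerm (X ^ 1) (X ^ 1) j := by
    intro j; rw [thetaTerm_neg_neg, pow_one]
  have tP : ∀ j, ex3 (ex3 (thetaTerm (-X : (ZMod 3)⟦X⟧) (-X) j)) =
      (-1) ^ j.natAbs * thetaTerm (X ^ 9) (X ^ 9) j := by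
    intro j
    rw [ex3_thetaTerm, ex3_thetaTerm, map_neg, map_neg, expand_X, map_pow, expand_X, ← pow_mul,
      thetaTerm_neg_neg]
  have tW : ∀ j, ex3 (thetaTerm (-(X ^ 5) : (ZMod 3)⟦X⟧) (-(X ^ 1)) j) =
      (-1) ^ j.natAbs * thetaTerm (X ^ 15) (X ^ 3) j := by
    intro j
    rw [ex3_thetaTerm, map_neg, map_neg, map_pow, map_pow, expand_X, ← pow_mul, ← pow_mul,
      thetaTerm_neg_neg]
  refine ⟨-2 * W, ?_⟩
  have h : HasSum (thetaTerm (-X : (ZMod 3)⟦X⟧) (-X))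
      (ex3 (ex3 Phi) + -X * ex3 W + -X * ex3 W) := by
    refine hasSum_mod_three ?_ ?_ ?_
    · refine hasSum_of_eq hP fun m => ?_
      rw [tP, t]
      obtain ⟨n, hn, hn'⟩ := exists_thetaTerm_eq (X : (ZMod 3)⟦X⟧) 1 1 (3 * m)
      obtain ⟨k, hk, hk'⟩ := exists_thetaTerm_eq (X : (ZMod 3)⟦X⟧) 9 9 m
      rw [hn, hk]
      congr 1
      · exact neg_one_pow_eq_of_even (by grind)
      · congr 1
        push_cast at hn' hk'
        zify
        linarith
    · refine hasSum_of_eq hW1 fun m => ?_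
      rw [tW, t]
      obtain ⟨n, hn, hn'⟩ := exists_thetaTerm_eq (X : (ZMod 3)⟦X⟧) 1 1 (3 * m + 1)
      obtain ⟨k, hk, hk'⟩ := exists_thetaTerm_eq (X : (ZMod 3)⟦X⟧) 15 3 m
      rw [hn, hk, show n = k + 1 by push_cast at hn' hk'; zify; linarith,
        neg_one_pow_eq_of_even (show Even ((3 * m + 1).natAbs + (m.natAbs + 1)) by grind)]
      ring
    · refine hasSum_of_eq hW2 fun m => ?_
      simp only [Function.comp_apply, Equiv.subLeft_apply]
      rw [tW, t]
      obtain ⟨n, hn, hn'⟩ := exists_thetaTerm_eq (X : (ZMod 3)⟦X⟧) 1 1 (3 * m + 2)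
      obtain ⟨k, hk, hk'⟩ := exists_thetaTerm_eq (X : (ZMod 3)⟦X⟧) 15 3 (-1 - m)
      rw [hn, hk, show n = k + 1 by push_cast at hn' hk'; zify; linarith,
        neg_one_pow_eq_of_even
          (show Even ((3 * m + 2).natAbs + ((-1 - m).natAbs + 1)) by grind)]
      ring
  have e := hasSum_Phi.unique h
  simp only [map_mul, map_neg, map_ofNat]
  linear_combination e

/-! ### The generating function of `pend` modulo 3 -/

/-- `∑ pend(n) qⁿ` modulo `3`. -/
noncomputable def pendSeries : (ZMod 3)⟦X⟧ := PowerSeries.mk fun n => (pend n : ZMod 3)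

/-- The indicator that a part `i` may occur with multiplicity `c ≥ 1` in a partition counted by `pend`. -/
def allowed (i c : ℕ) : ZMod 3 := if Even i → 2 ≤ c then 1 else 0

lemma pendSeries_eq_genFun : pendSeries = Nat.Partition.genFun allowed := by
  classical
  ext n
  rw [pendSeries, coeff_mk, Nat.Partition.coeff_genFun]
  have h (p : n.Partition) : p.parts.toFinsupp.prod allowed =
      if ∀ k ∈ p.parts, Even k → 2 ≤ p.parts.count k then 1 else 0 := by
    simp only [allowed, Finsupp.prod]
    rw [Finset.prod_boole]
    simp
  simp only [h]
  rw [Finset.sum_boole, pend, Nat.card_eq_fintype_card, Fintype.card_subtype]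

/-- The factor of the generating function that belongs to the part size `i + 1`. -/
noncomputable def factor (i : ℕ) : (ZMod 3)⟦X⟧ :=
  1 + ∑' j, allowed (i + 1) (j + 1) • X ^ ((i + 1) * (j + 1))

lemma hasProd_pendSeries : HasProd factor pendSeries := by
  rw [pendSeries_eq_genFun]
  exact Nat.Partition.hasProd_genFun allowed

lemma hasSum_X_pow_succ (i : ℕ) : ∃ G : (ZMod 3)⟦X⟧, G * (1 - X ^ (i + 1)) = 1 ∧
    HasSum (fun j => (X : (ZMod 3)⟦X⟧) ^ ((i + 1) * (j + 1))) (G - 1) := by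
  have h0 : constantCoeff ((X : (ZMod 3)⟦X⟧) ^ (i + 1)) = 0 := by simp
  refine ⟨∑' j : ℕ, (X ^ (i + 1)) ^ j,
    WithPiTopology.tsum_pow_mul_one_sub_of_constantCoeff_eq_zero h0, ?_⟩
  have h := (WithPiTopology.summable_pow_of_constantCoeff_eq_zero h0).hasSum
  have h' := (hasSum_nat_add_iff' 1).mpr h
  simpa [← pow_mul] using h'

lemma factor_odd (k : ℕ) : factor (2 * k) * (1 - X ^ (2 * k + 1)) = 1 := by
  obtain ⟨G, hG, hs⟩ := hasSum_X_pow_succ (2 * k)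
  have h : factor (2 * k) = 1 + (G - 1) := by
    rw [factor, ← hs.tsum_eq]
    congr 1
    refine tsum_congr fun j => ?_
    rw [allowed, if_pos, one_smul]
    intro h
    exact absurd h (by simp)
  rw [h]
  linear_combination hG

/-- For an even part the factor is `1 + x² + x³ + ⋯ = (1 + x³) / (1 - x²)` with `x = q^(2k+2)`. -/
lemma factor_even (k : ℕ) :
    factor (2 * k + 1) * (1 - X ^ (4 * (k + 1))) = 1 + X ^ (6 * (k + 1)) := by
  obtain ⟨G, hG, hs⟩ := hasSum_X_pow_succ (2 * k + 1)
  have hev : Even (2 * k + 1 + 1) := ⟨k + 1, by ring⟩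
  have h : factor (2 * k + 1) = 1 + ((G - 1) - X ^ (2 * k + 1 + 1)) := by
    rw [factor, ← (hs.sub (hasSum_ite_eq 0 (X ^ (2 * k + 1 + 1)))).tsum_eq]
    congr 1
    refine tsum_congr fun j => ?_
    rw [allowed]
    rcases Nat.eq_zero_or_pos j with rfl | hj
    · simp [hev]
    · rw [if_pos (fun _ => by omega), if_neg (by omega), one_smul, sub_zero]
  rw [h]
  linear_combination (1 + X ^ (2 * k + 2)) * hG

lemma pendSeries_mul : pendSeries * (O * ex2 (ex2 E)) = ex3 (ex2 D) := by
  have hO := (multipliable_sub_X_pow (e := fun k => 2 * k + 1) (by intro k; omega)).hasProd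
  have hE := (multipliable_sub_X_pow (e := fun k => 4 * (k + 1)) (by intro k; omega)).hasProd
  have e4 : ex2 (ex2 E) = ∏' k : ℕ, (1 - X ^ (4 * (k + 1))) := by
    rw [ex2_E, expand_tprod_sub _ (by intro k; omega)]
    exact tprod_congr fun k => by rw [show 2 * (2 * (k + 1)) = 4 * (k + 1) by ring]
  have e6 : ex3 (ex2 D) = ∏' k : ℕ, (1 + X ^ (6 * (k + 1))) := by
    rw [ex2_D, expand_tprod_add _ (by intro k; omega)]
    exact tprod_congr fun k => by rw [show 3 * (2 * (k + 1)) = 6 * (k + 1) by ring]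
  have h6 := (multipliable_add_X_pow (e := fun k => 6 * (k + 1)) (by intro k; omega)).hasProd
  have h2 : Tendsto (fun n : ℕ => 2 * n) atTop atTop :=
    tendsto_atTop_mono (fun n => show n ≤ 2 * n by omega) tendsto_id
  have tP := hasProd_pendSeries.tendsto_prod_nat.comp h2
  rw [e4, e6]
  refine tendsto_nhds_unique (tP.mul (hO.tendsto_prod_nat.mul hE.tendsto_prod_nat))
    (h6.tendsto_prod_nat.congr fun n => ?_)
  simp only [Function.comp_apply]
  induction n with
  | zero => simp
  | succ n ih =>
    rw [show 2 * (n + 1) = 2 * n + 1 + 1 by ring]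
    simp only [Finset.prod_range_succ, ih]
    rw [← factor_even n]
    linear_combination (- (∏ x ∈ Finset.range (2 * n), factor x) *
      (∏ x ∈ Finset.range n, (1 - X ^ (2 * x + 1))) *
      (∏ x ∈ Finset.range n, (1 - X ^ (4 * (x + 1)))) * (factor (2 * n + 1) *
        (1 - X ^ (4 * (n + 1))))) * factor_odd n

/-! ### Sections of power series along residue classes modulo 3 -/

/-- The series `∑ a(3n + r) qⁿ` extracted from `∑ a(n) qⁿ`. -/
noncomputable def sect (r : ℕ) (f : (ZMod 3)⟦X⟧) : (ZMod 3)⟦X⟧ :=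
  PowerSeries.mk fun n => coeff (3 * n + r) f

lemma sect_add (r : ℕ) (f g : (ZMod 3)⟦X⟧) : sect r (f + g) = sect r f + sect r g := by
  ext n; simp [sect]

lemma sect_X_pow_mul_ex3 {i r : ℕ} (hi : i < 3) (hr : r < 3) (g : (ZMod 3)⟦X⟧) :
    sect r (X ^ i * ex3 g) = if i = r then g else 0 := by
  ext n
  rw [sect, coeff_mk, coeff_X_pow_mul', coeff_expand]
  split_ifs with h1 h2 h3 h3 h3
  · rw [h3, show (3 * n + r - r) / 3 = n by omega]
  · omega
  · omega
  · simp
  · omega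
  · simp

lemma eq_sum_sect (f : (ZMod 3)⟦X⟧) :
    f = X ^ 0 * ex3 (sect 0 f) + X ^ 1 * ex3 (sect 1 f) + X ^ 2 * ex3 (sect 2 f) := by
  have key : ∀ r < 3, ∀ n, coeff (3 * n + r) f = coeff (3 * n + r)
      (X ^ 0 * ex3 (sect 0 f) + X ^ 1 * ex3 (sect 1 f) + X ^ 2 * ex3 (sect 2 f)) := by
    intro r hr n
    have h : sect r (X ^ 0 * ex3 (sect 0 f) + X ^ 1 * ex3 (sect 1 f) + X ^ 2 * ex3 (sect 2 f))
        = sect r f := by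
      rw [sect_add, sect_add, sect_X_pow_mul_ex3 (by omega) hr, sect_X_pow_mul_ex3 (by omega) hr,
        sect_X_pow_mul_ex3 (by omega) hr]
      interval_cases r <;> simp
    have := congrArg (coeff n) h
    simpa only [sect, coeff_mk] using this.symm
  ext n
  rw [← Nat.div_add_mod n 3]
  exact key _ (Nat.mod_lt _ (by norm_num)) _

lemma sect_mul_ex3 {r : ℕ} (hr : r < 3) (f g : (ZMod 3)⟦X⟧) :
    sect r (f * ex3 g) = sect r f * g := by
  have h : f * ex3 g = X ^ 0 * ex3 (sect 0 f * g) + X ^ 1 * ex3 (sect 1 f * g) +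
      X ^ 2 * ex3 (sect 2 f * g) := by
    conv_lhs => rw [eq_sum_sect f]
    simp only [map_mul]
    ring
  rw [h, sect_add, sect_add, sect_X_pow_mul_ex3 (by omega) hr, sect_X_pow_mul_ex3 (by omega) hr,
    sect_X_pow_mul_ex3 (by omega) hr]
  interval_cases r <;> simp

lemma sect_eq {r : ℕ} (hr : r < 3) {f a b c : (ZMod 3)⟦X⟧}
    (h : f = ex3 a + X * ex3 b + X ^ 2 * ex3 c) :
    sect r f = if r = 0 then a else if r = 1 then b else c := by
  rw [h, show ex3 a + X * ex3 b + X ^ 2 * ex3 c =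
    X ^ 0 * ex3 a + X ^ 1 * ex3 b + X ^ 2 * ex3 c by ring, sect_add, sect_add,
    sect_X_pow_mul_ex3 (by omega) hr, sect_X_pow_mul_ex3 (by omega) hr,
    sect_X_pow_mul_ex3 (by omega) hr]
  interval_cases r <;> simp

/-! ### Product identities between the theta functions -/

lemma D_ne_zero : D ≠ 0 := left_ne_zero_of_mul_eq_one D_mul_O
lemma O_ne_zero : O ≠ 0 := right_ne_zero_of_mul_eq_one D_mul_O
lemma psi_ne_zero : psi ≠ 0 := mul_ne_zero D_ne_zero (expand_ne_zero _ E_ne_zero)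
lemma Phi_ne_zero : Phi ≠ 0 := mul_ne_zero (pow_ne_zero _ O_ne_zero) (expand_ne_zero _ E_ne_zero)

lemma flip_psi : flip psi = O * ex2 (ex2 E) := by
  rw [psi, map_mul, flip_D, flip_ex2]
  have h := congrArg ex2 D_mul_E
  rw [map_mul] at h
  linear_combination O * h

/-- `∑ pend(n) qⁿ = ∏ (1 + q^(6k)) / ψ(-q)` modulo `3`. -/
lemma pendSeries_mul_flip_psi : pendSeries * flip psi = ex3 (ex2 D) := by
  rw [flip_psi, pendSeries_mul]

/-- `ψ(-q) φ(-q²) = ψ(q) φ(-q)`. -/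
lemma flip_psi_mul : flip psi * ex2 Phi = psi * Phi := by
  have h1 := congrArg ex2 O_mul_ex2_E
  have h2 := D_mul_O
  rw [map_mul] at h1
  rw [flip_psi, Phi, psi, map_mul, map_pow]
  linear_combination O * (ex2 O * ex2 (ex2 E) + ex2 E) * h1 - (O * (ex2 E) ^ 2) * h2

/-- `∏ (1 + q^(2k)) · f(q, q²) · φ(-q²) = ψ(q) φ(-q³)`. -/
lemma ex2_D_mul_Aser : ex2 D * Aser * ex2 Phi = psi * ex3 Phi := by
  have h1 := congrArg ex2 O_mul_ex2_E
  have h2 := congrArg ex2 D_mul_O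
  have h3 := congrArg ex3 O_mul_ex2_E
  have h4 := congrArg ex3 D_mul_O
  have h5 := Aser_mul_ex3_D
  simp only [map_mul, map_one] at h1 h2 h3 h4
  rw [Phi, psi]
  simp only [map_mul, map_pow]
  calc _ = Aser * (ex2 D * ex2 O) * (ex2 O * ex2 (ex2 E)) := by ring
    _ = Aser * (ex3 D * ex3 O) * ex2 E := by rw [h2, h1, h4]
    _ = (Aser * ex3 D) * ex3 O * ex2 E := by ring
    _ = D * (ex3 O * ex3 (ex2 E)) * ex3 O * ex2 E := by rw [h5, h3]
    _ = _ := by ring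

lemma flip_psi_dissection : flip psi = ex3 (flip Aser) - X * ex3 (ex3 (flip psi)) := by
  conv_lhs => rw [psi_dissection]
  rw [map_add, map_mul, flip_ex3, flip_ex3, flip_ex3, rescale_X, map_neg, map_one]
  ring

/-! ### The section `∑ pend(9n + 1) qⁿ` and its self-similarity -/

/-- By `Phi_dissection` at `q²`, `φ(-q²) = φ(-q¹⁸) + q² W(q⁶)`, and the only product of two of these
summands with exponents divisible by `3` is `φ(-q¹⁸)²`. -/
lemma sect_zero_ex2_Phi_sq : sect 0 (ex2 Phi ^ 2) = ex3 (ex2 Phi) ^ 2 := by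
  obtain ⟨W, hW⟩ := Phi_dissection
  have h : ex2 Phi = ex3 (ex3 (ex2 Phi)) + X ^ 2 * ex3 (ex2 W) := by
    conv_lhs => rw [hW]
    rw [map_add, map_mul, expand_X, ex2_ex3, ex2_ex3, ex2_ex3]
  have h2 : ex2 Phi ^ 2 = ex3 (ex3 (ex2 Phi) ^ 2) + X * ex3 (X * ex2 W ^ 2) +
      X ^ 2 * ex3 (2 * ex3 (ex2 Phi) * ex2 W) := by
    conv_lhs => rw [h]
    simp only [map_mul, map_pow, map_ofNat, expand_X]
    ring
  rw [sect_eq (by omega) h2]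
  simp

/-- `∑ pend(3n + 1) qⁿ = ψ(-q³) φ(q³) / φ(-q²)` modulo `3`. Here `1 / ψ(-q) = ψ(-q)² / ψ(-q³)`, and the
exponents `1` modulo `3` of `ψ(-q)²` come from the cross term of the dissection of `ψ(-q)`. -/
lemma sect_one_pendSeries_mul :
    sect 1 pendSeries * ex2 Phi = ex3 (flip psi * flip Phi) := by
  have h1 : pendSeries * ex3 (flip psi) = (flip psi) ^ 2 * ex3 (ex2 D) := by
    rw [← pow_three_eq, ← pendSeries_mul_flip_psi]; ring
  have h2 : (flip psi) ^ 2 = ex3 (flip Aser ^ 2) + X * ex3 (flip Aser * ex3 (flip psi)) +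
      X ^ 2 * ex3 (ex3 (flip psi) ^ 2) := by
    conv_lhs => rw [flip_psi_dissection]
    simp only [map_mul, map_pow]
    linear_combination (- X * ex3 (flip Aser) * ex3 (ex3 (flip psi))) * three_eq_zero
  have h3 := congrArg (sect 1) h1
  rw [sect_mul_ex3 (by omega), sect_mul_ex3 (by omega), sect_eq (by omega) h2] at h3
  simp only [one_ne_zero, if_false, if_true] at h3
  have h4 := congrArg flip ex2_D_mul_Aser
  simp only [map_mul, flip_ex2, flip_ex3] at h4
  have hne : flip psi ≠ 0 := fun h => psi_ne_zero (by rw [← flip_flip psi, h, map_zero])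
  refine mul_right_cancel₀ hne ?_
  rw [map_mul]
  linear_combination ex2 Phi * h3 + ex3 (flip psi) * h4

/-- `∑ pend(9n + 1) qⁿ = ψ(q) φ(-q⁶)²` modulo `3`, from `1 / φ(-q²) = φ(-q²)² / φ(-q⁶)`. -/
lemma sect_sect_pendSeries : sect 0 (sect 1 pendSeries) = psi * ex3 (ex2 Phi ^ 2) := by
  have h1 : sect 1 pendSeries * ex3 (ex2 Phi) = ex2 Phi ^ 2 * ex3 (flip psi * flip Phi) := by
    rw [← sect_one_pendSeries_mul, ← pow_three_eq]; ring
  have h2 := congrArg (sect 0) h1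
  rw [sect_mul_ex3 (by omega), sect_mul_ex3 (by omega), sect_zero_ex2_Phi_sq] at h2
  have h3 := congrArg flip flip_psi_mul
  rw [map_mul, map_mul, flip_flip, flip_ex2] at h3
  refine mul_right_cancel₀ (expand_ne_zero two_ne_zero Phi_ne_zero) ?_
  rw [h2, ← h3, map_pow]
  ring

/-- The series `ψ(q) φ(-q⁶)²`, which is `∑ pend(9n + 1) qⁿ` modulo `3` by `coeff_K`. -/
noncomputable def K : (ZMod 3)⟦X⟧ := psi * ex3 (ex2 Phi ^ 2)

lemma psi_dissection' : psi = ex3 Aser + X * ex3 (ex3 psi) + X ^ 2 * ex3 0 := by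
  rw [map_zero, mul_zero, add_zero]; exact psi_dissection

/-- No triangular number is `2` modulo `3`, and `φ(-q⁶)` is a series in `q³`. -/
lemma sect_two_K : sect 2 K = 0 := by
  rw [K, sect_mul_ex3 (by omega), sect_eq (by omega) psi_dissection']
  simp

lemma sect_zero_sect_one_K : sect 0 (sect 1 K) = K := by
  have h : sect 1 K = ex2 Phi ^ 2 * ex3 psi := by
    rw [K, sect_mul_ex3 (by omega), sect_eq (by omega) psi_dissection']
    simp [mul_comm]
  rw [h, sect_mul_ex3 (by omega), sect_zero_ex2_Phi_sq, K, map_pow, mul_comm]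

lemma coeff_K (n : ℕ) : coeff n K = (pend (9 * n + 1) : ZMod 3) := by
  rw [K, ← sect_sect_pendSeries]
  simp only [sect, coeff_mk, pendSeries]
  rw [show 3 * (3 * n + 0) + 1 = 9 * n + 1 by ring]

lemma coeff_K_three_mul_add_two (n : ℕ) : coeff (3 * n + 2) K = 0 := by
  have h := congrArg (coeff n) sect_two_K
  simpa [sect] using h

lemma coeff_K_nine_mul_add_one (n : ℕ) : coeff (9 * n + 1) K = coeff n K := by
  have h := congrArg (coeff n) sect_zero_sect_one_K
  simp only [sect, coeff_mk] at h
  rwa [show 3 * (3 * n + 0) + 1 = 9 * n + 1 by ring] at h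

/-- With `8 N + 1` as the parameter, the self-similarity `N ↦ 9 N + 1` of the coefficients of `K` becomes
multiplication by `9`, and the vanishing at `N = 3 n + 2` is the case `8 N + 1 = 24 n + 17`. -/
lemma coeff_K_eq_zero (β n N : ℕ) (h : 8 * N + 1 = 9 ^ β * (24 * n + 17)) : coeff N K = 0 := by
  induction β generalizing N with
  | zero =>
    obtain rfl : N = 3 * n + 2 := by omega
    exact coeff_K_three_mul_add_two n
  | succ β ih =>
    rw [pow_succ] at h
    obtain ⟨M, rfl⟩ : ∃ M, N = 9 * M + 1 := ⟨N / 9, by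
      have : 9 ∣ 8 * N + 1 := ⟨9 ^ β * (24 * n + 17), by rw [h]; ring⟩
      omega⟩
    rw [coeff_K_nine_mul_add_one]
    exact ih M (by linarith)

end PendCong

theorem pend_congruence_family (α n : ℕ) (hα : 1 ≤ α) :
    8 ∣ (17 * 3 ^ (2 * α) - 1) ∧
    pend (3 ^ (2 * α + 1) * n + (17 * 3 ^ (2 * α) - 1) / 8) ≡ 0 [MOD 3] := by
  obtain ⟨β, rfl⟩ := Nat.exists_eq_add_of_le' hα
  have h8 : 9 ^ β % 8 = 1 := by simp [Nat.pow_mod]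
  rw [pow_succ 3 (2 * (β + 1)), pow_mul, show 3 ^ 2 = 9 by norm_num, pow_succ]
  refine ⟨by omega, ?_⟩
  set m := 9 ^ β with hm
  -- `17 * 9 ^ (β + 1) - 1 = 8 * (9 * L + 1)` with `8 * L + 1 = 17 * 9 ^ β`
  obtain ⟨L, hL⟩ : ∃ L, 8 * L + 1 = 17 * m := ⟨(17 * m - 1) / 8, by omega⟩
  have hidx : m * 9 * 3 * n + (17 * (m * 9) - 1) / 8 = 9 * (3 * m * n + L) + 1 := by
    rw [show (17 * (m * 9) - 1) / 8 = 9 * L + 1 by omega]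
    ring
  rw [hidx, ← ZMod.natCast_eq_natCast_iff, ← PendCong.coeff_K, Nat.cast_zero]
  refine PendCong.coeff_K_eq_zero β n _ ?_
  rw [← hm]
  linarith
end
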